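/- Let Γ be a finite tree having at least one essential vertex, and let m(Γ) denote the number of essential vertices of Γ. Then for every n ≥ 1 the topological complexity of the configuration space of n distinct ordered points on Γ satisfies TC(F(Γ, n)) ≤ 2·m(Γ) + 1. -/

import Mathlib

/-! The bound holds for every connected finite graph with an essential vertex, and only the
connectedness of the tree is used.

The graph is presented by its edges (`GModel`).  Vertices of degree two can be removed by merging
the two adjacent edges (`GModel.exists_reduced`), so every vertex may be assumed to be either
essential or a leaf.

*Path-connectedness* (`GModel.joined_all`).  All particles can be gathered on one edge at an
essential vertex (`GModel.exists_gather`), and with three half-edges at that vertex two neighbouring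
particles can be exchanged there (`GModel.joined_swap`).

*Strata.*  For a set `A` of essential vertices, let `Stratum n A` be the open set of configurations
in which each vertex of `A` has a unique nearest particle, at distance less than `1/4`, and in which
the other essential vertices are free.  There, the vertices of `A` attract their nearest particles,
and all other particles remain on their edges.  Hence the stratum splits into open cells according
to which particle is near which vertex, on which edges the other particles are, and in which order;
each cell is contractible in the configuration space (`GModel.cell_contract`).  As the configuration
space is path-connected, there is a motion planner on each product of two cells.

*Cover.*  With `m` essential vertices, a pair of configurations gives `2 m` numbers: the distances
from the essential vertices to the nearest particles, in either configuration.  For a set `A` of the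
`2 m` indices, consider the open set of the pairs for which the numbers indexed by `A` are smaller
than all the others and which lie in the strata determined by `A`.  Distinct sets `A` of the same
cardinality give disjoint open sets, so the motion planners glue for each fixed cardinality, and
there are `2 m + 1` cardinalities.  A pair of configurations is covered by the set `A` of the
vanishing numbers. -/

open unitInterval

/-- A continuous motion-planning section of the path fibration `π : PX → X × X`,
`π γ = (γ 0, γ 1)`, over a subset `U ⊆ X × X`.  Here `PX = C(I, X)` is the space of
paths in `X` with the compact–open topology. -/
def HasMotionPlanner {X : Type*} [TopologicalSpace X] (U : Set (X × X)) : Prop :=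
  ∃ s : C(U, C(unitInterval, X)), ∀ p : U, s p 0 = (p : X × X).1 ∧ s p 1 = (p : X × X).2

/-- The topological complexity of a space `X`: the minimal number `k` such that `X × X`
can be covered by `k` open subsets, each admitting a continuous section of the path
fibration; `⊤` (infinity) if no such `k` exists. -/
noncomputable def topologicalComplexity (X : Type*) [TopologicalSpace X] : ℕ∞ :=
  sInf {c : ℕ∞ | ∃ k : ℕ, c = k ∧ ∃ U : Fin k → Set (X × X),
    (∀ i, IsOpen (U i)) ∧ (⋃ i, U i) = Set.univ ∧ ∀ i, HasMotionPlanner (U i)}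

/-- A finite (multi-)graph: finitely many vertices and edges, each edge having a
source and a target vertex. -/
structure FinGraph where
  V : Type
  E : Type
  [fintypeV : Fintype V]
  [fintypeE : Fintype E]
  s : E → V
  t : E → V

attribute [instance] FinGraph.fintypeV FinGraph.fintypeE

namespace FinGraph

variable (G : FinGraph)

instance : TopologicalSpace G.V := ⊥
instance : TopologicalSpace G.E := ⊥

/-- The gluing relation of the geometric realization: the endpoints of each edge
(a copy of `[0,1]`) are identified with its source and target vertices. -/
inductive GlueRel (G : FinGraph) :
    (G.E × unitInterval ⊕ G.V) → (G.E × unitInterval ⊕ G.V) → Prop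
  | src (e : G.E) : GlueRel G (Sum.inl (e, 0)) (Sum.inr (G.s e))
  | tgt (e : G.E) : GlueRel G (Sum.inl (e, 1)) (Sum.inr (G.t e))

/-- The geometric realization of a finite graph: a compact 1-dimensional CW complex. -/
def Space (G : FinGraph) : Type := Quot (GlueRel G)

instance : TopologicalSpace G.Space := inferInstanceAs (TopologicalSpace (Quot _))

/-- The point of the realization corresponding to a vertex. -/
def vtx (v : G.V) : G.Space := Quot.mk _ (Sum.inr v)

/-- The point of the realization at parameter `x` along the edge `e`. -/
def edgePt (e : G.E) (x : unitInterval) : G.Space := Quot.mk _ (Sum.inl (e, x))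

/-- The degree `η(v)` of a vertex: the number of edge-ends incident to it
(a loop counts twice). -/
noncomputable def degree (v : G.V) : ℕ :=
  Nat.card {e : G.E // G.s e = v} + Nat.card {e : G.E // G.t e = v}

end FinGraph



/-- The configuration space of `n` distinct ordered points in `X`. -/
abbrev Conf (X : Type*) [TopologicalSpace X] (n : ℕ) : Type _ :=
  {z : Fin n → X // Function.Injective z}

/-- A finite tree: a finite graph whose realization is connected and simply
connected (equivalently, a compact connected simply connected 1-dimensional
CW complex). -/
def FinGraph.IsTree (G : FinGraph) : Prop :=
  ConnectedSpace G.Space ∧ SimplyConnectedSpace G.Space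

/-- The number `m(Γ)` of essential vertices (vertices of degree at least 3). -/
noncomputable def FinGraph.essCount (G : FinGraph) : ℕ :=
  Nat.card {v : G.V // 3 ≤ G.degree v}

/-- A presentation of a space as a finite graph: finitely many edges `c e : [0,1] → Γ`, jointly
surjective, which meet each other and themselves only at end points.  The parametrizations are
defined on all of `ℝ`, but only their restrictions to `[0,1]` matter.  The vertices are the points
`c e 0` and `c e 1`; no separate vertex set is recorded. -/
structure GModel (Γ : Type) [TopologicalSpace Γ] where
  E : Type
  fin : Fintype E
  c : E → ℝ → Γ
  cont : ∀ e, Continuous (c e)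
  surj : ∀ y, ∃ e t, (0 ≤ t ∧ t ≤ 1) ∧ c e t = y
  inj : ∀ e f t r, (0 ≤ t ∧ t ≤ 1) → (0 ≤ r ∧ r ≤ 1) → c e t = c f r →
    (e = f ∧ t = r) ∨ ((t = 0 ∨ t = 1) ∧ (r = 0 ∨ r = 1))

namespace GModel

attribute [instance] GModel.fin

variable {Γ : Type} [TopologicalSpace Γ] (M : GModel Γ)

/-- The point at distance `s` from the end of the half-edge `h`, along the edge of `h`. The
half-edge `(e, false)` starts at `c e 0`, and `(e, true)` starts at `c e 1`. -/
def hp (h : M.E × Bool) (s : ℝ) : Γ := M.c h.1 (if h.2 then 1 - s else s)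

/-- The same edge seen from its other end. -/
def flip {E : Type} (h : E × Bool) : E × Bool := (h.1, !h.2)

/-- The half-edges issuing from a point; their number is the degree of the point. -/
def halves (y : Γ) : Set (M.E × Bool) := {h | M.hp h 0 = y}

/-- The essential vertices. -/
def Ess : Set Γ := {y | 3 ≤ (M.halves y).ncard}

lemma hp_flip (h : M.E × Bool) (s : ℝ) : M.hp (flip h) s = M.hp h (1 - s) := by
  rcases h with ⟨e, b⟩; cases b <;> simp [hp, flip]

lemma hp_cont (h : M.E × Bool) : Continuous (M.hp h) := by
  have h1 : Continuous fun s : ℝ => if h.2 then 1 - s else s := by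
    cases h.2 <;> simp <;> fun_prop
  exact (M.cont h.1).comp h1

/-- An interior point of an edge has no other representation, except from the other end. -/
lemma hp_inj {h k : M.E × Bool} {s r : ℝ} (hs : 0 < s ∧ s < 1) (hr : 0 ≤ r ∧ r ≤ 1)
    (e : M.hp h s = M.hp k r) : (k = h ∧ r = s) ∨ (k = flip h ∧ r = 1 - s) := by
  rcases h with ⟨e, b⟩; rcases k with ⟨f, b'⟩
  obtain ⟨h1, h2⟩ := hs
  obtain ⟨h3, h4⟩ := hr
  have := M.inj _ _ _ _ ?_ ?_ e
  · cases b <;> cases b' <;> simp [flip] at this ⊢ <;>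
    · rcases this with ⟨h, h'⟩ | ⟨h | h, -⟩
      · exact ⟨h.symm, by linarith⟩
      · linarith
      · linarith
  · cases b <;> simp <;> constructor <;> linarith
  · cases b' <;> simp <;> constructor <;> linarith

lemma hp_same {h : M.E × Bool} {s r : ℝ} (hs : 0 < s ∧ s < 1) (hr : 0 ≤ r ∧ r ≤ 1)
    (e : M.hp h s = M.hp h r) : r = s := by
  rcases M.hp_inj hs hr e with h1 | h1
  · exact h1.2
  · have := congrArg Prod.snd h1.1
    simp [flip] at this

lemma hp_edge {h k : M.E × Bool} {s r : ℝ} (hs : 0 < s ∧ s < 1) (hr : 0 ≤ r ∧ r ≤ 1)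
    (e : M.hp h s = M.hp k r) : k.1 = h.1 := by
  rcases M.hp_inj hs hr e with h1 | h1 <;> simp [h1.1, flip]

/-- Two points on different edges can only agree if both are end points. -/
lemma c_eq_ends {e f : M.E} {t r : ℝ} (ht : 0 ≤ t ∧ t ≤ 1) (hr : 0 ≤ r ∧ r ≤ 1)
    (h : M.c e t = M.c f r) (hne : ¬ (e = f ∧ t = r)) : ∃ b b' : Bool,
    t = (if b then 1 else 0) ∧ r = (if b' then 1 else 0) ∧ M.hp (e, b) 0 = M.c e t ∧
    M.hp (f, b') 0 = M.c f r := by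
  rcases M.inj _ _ _ _ ht hr h with h1 | ⟨h1 | h1, h2 | h2⟩
  · exact absurd h1 hne
  · exact ⟨false, false, by simp [h1, h2, hp]⟩
  · exact ⟨false, true, by simp [h1, h2, hp]⟩
  · exact ⟨true, false, by simp [h1, h2, hp]⟩
  · exact ⟨true, true, by simp [h1, h2, hp]⟩

/-! ### The quotient topology -/

/-- The gluing map from the disjoint union of the edges. -/
def Q : (Σ _ : M.E, I) → Γ := fun z => M.c z.1 z.2

/-- The gluing map times the identity of `[0,1]`. -/
def Q2 : (Σ _ : M.E, I × I) → Γ × I := fun z => (M.c z.1 z.2.1, z.2.2)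

lemma Q_quot [T2Space Γ] : Topology.IsQuotientMap M.Q := by
  have hc : Continuous M.Q :=
    continuous_sigma fun e => (M.cont e).comp continuous_subtype_val
  refine hc.isClosedMap.isQuotientMap hc fun y => ?_
  obtain ⟨e, t, ht, rfl⟩ := M.surj y
  exact ⟨⟨e, t, ht⟩, rfl⟩

lemma Q2_quot [T2Space Γ] : Topology.IsQuotientMap M.Q2 := by
  have hc : Continuous M.Q2 := continuous_sigma fun e =>
    ((M.cont e).comp (continuous_subtype_val.comp continuous_fst)).prodMk continuous_snd
  refine hc.isClosedMap.isQuotientMap hc fun ⟨y, s⟩ => ?_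
  obtain ⟨e, t, ht, rfl⟩ := M.surj y
  exact ⟨⟨e, ⟨t, ht⟩, s⟩, rfl⟩

/-- An edge through a given point, and the parameter of the point on it. -/
noncomputable def ed (y : Γ) : M.E := (M.surj y).choose
/-- The parameter of a point on the edge `M.ed y`. -/
noncomputable def par (y : Γ) : ℝ := (M.surj y).choose_spec.choose

lemma par_mem (y : Γ) : 0 ≤ M.par y ∧ M.par y ≤ 1 := (M.surj y).choose_spec.choose_spec.1
lemma c_ed_par (y : Γ) : M.c (M.ed y) (M.par y) = y := (M.surj y).choose_spec.choose_spec.2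

/-- A function given edgewise descends to `Γ`, if it is compatible with the gluing. -/
noncomputable def desc {Z : Type} (F : M.E → ℝ → Z) (y : Γ) : Z := F (M.ed y) (M.par y)

lemma desc_c {Z : Type} {F : M.E → ℝ → Z}
    (hF : ∀ (b b' : Bool) e f, M.hp (e, b) 0 = M.hp (f, b') 0 →
      F e (if b then 1 else 0) = F f (if b' then 1 else 0))
    (e : M.E) (t : ℝ) (ht : 0 ≤ t ∧ t ≤ 1) : M.desc F (M.c e t) = F e t := by
  have h := M.c_ed_par (M.c e t)
  have hm := M.par_mem (M.c e t)
  unfold desc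
  generalize M.ed (M.c e t) = f at *
  generalize M.par (M.c e t) = r at *
  by_cases hne : f = e ∧ r = t
  · rw [hne.1, hne.2]
  · obtain ⟨b, b', h1, h2, h3, h4⟩ := M.c_eq_ends hm ht h hne
    rw [h1, h2]
    exact hF _ _ _ _ (by rw [h3, h4, h])

/-- The gluing data does not see a set of edges closed under adjacency: it is everything or empty
when `Γ` is connected. -/
lemma edges_conn [T2Space Γ] [ConnectedSpace Γ] (S : Set M.E)
    (hS : ∀ h k : M.E × Bool, M.hp h 0 = M.hp k 0 → h.1 ∈ S → k.1 ∈ S) {a : M.E} (ha : a ∈ S)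
    (e : M.E) : e ∈ S := by
  classical
  let F : M.E → ℝ → Bool := fun e _ => decide (e ∈ S)
  have hF : ∀ (b b' : Bool) e f, M.hp (e, b) 0 = M.hp (f, b') 0 →
      F e (if b then 1 else 0) = F f (if b' then 1 else 0) := by
    intro b b' e f h
    have h1 := hS _ _ h
    have h2 := hS _ _ h.symm
    simp only [F]
    congr 1
    exact propext ⟨h1, h2⟩
  have hc : Continuous (M.desc F) := by
    refine M.Q_quot.continuous_iff.2 (continuous_sigma fun e => ?_)
    have : (M.desc F ∘ M.Q ∘ fun t : I => (⟨e, t⟩ : Σ _ : M.E, I)) = fun t => decide (e ∈ S) :=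
      funext fun t => M.desc_c hF e t t.2
    change Continuous (M.desc F ∘ M.Q ∘ fun t : I => (⟨e, t⟩ : Σ _ : M.E, I))
    rw [this]
    exact continuous_const
  have h1 := PreconnectedSpace.constant inferInstance hc (x := M.c a 0) (y := M.c e 0)
  rw [M.desc_c hF _ _ (by norm_num), M.desc_c hF _ _ (by norm_num)] at h1
  simpa [F, ha] using h1

/-- A kind of distance of edges from a given edge `a`: every other edge has a neighbour which is
closer. -/
lemma exists_edge_dist [T2Space Γ] [ConnectedSpace Γ] (a : M.E) : ∃ D : M.E → ℕ,
    ∀ e, e ≠ a → ∃ h k : M.E × Bool, h.1 = e ∧ M.hp h 0 = M.hp k 0 ∧ D k.1 < D e := by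
  classical
  let S : ℕ → Set M.E := fun m => Nat.rec {a}
    (fun _ T => {e | e ∈ T ∨ ∃ h k : M.E × Bool, h.1 = e ∧ M.hp h 0 = M.hp k 0 ∧ k.1 ∈ T}) m
  have hS : ∀ m e, e ∈ S (m + 1) ↔
    e ∈ S m ∨ ∃ h k : M.E × Bool, h.1 = e ∧ M.hp h 0 = M.hp k 0 ∧ k.1 ∈ S m := fun m e => Iff.rfl
  have hall : ∀ e, ∃ m, e ∈ S m := by
    refine M.edges_conn {e | ∃ m, e ∈ S m} ?_ (a := a) ⟨0, rfl⟩
    rintro h k hk ⟨m, hm⟩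
    exact ⟨m + 1, (hS _ _).2 (Or.inr ⟨k, h, rfl, hk.symm, hm⟩)⟩
  refine ⟨fun e => sInf {m | e ∈ S m}, fun e he => ?_⟩
  have h1 : e ∈ S (sInf {m | e ∈ S m}) := Nat.sInf_mem (s := {m | e ∈ S m}) (hall e)
  obtain ⟨m, hm⟩ : ∃ m, sInf {m | e ∈ S m} = m + 1 := by
    refine Nat.exists_eq_succ_of_ne_zero fun h0 => ?_
    rw [h0] at h1
    exact he h1
  rw [hm] at h1
  have h2 : e ∉ S m := fun h => by
    have := Nat.sInf_le (s := {m | e ∈ S m}) h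
    omega
  obtain ⟨h, k, h3, h4, h5⟩ := ((hS _ _).1 h1).resolve_left h2
  refine ⟨h, k, h3, h4, ?_⟩
  change _ < sInf {m | e ∈ S m}
  rw [hm]
  exact Nat.lt_succ_of_le (Nat.sInf_le (s := {m | k.1 ∈ S m}) h5)

/-! ### Path-connectedness of the configuration space -/

section Conn

variable {n : ℕ}

/-- The closed initial segment of length `s` of the half-edge `h` carries no particle of `x`, except
possibly `p`. -/
def Clear (x : Conf Γ n) (p : Fin n) (h : M.E × Bool) (s : ℝ) : Prop :=
  ∀ q, q ≠ p → ∀ u, 0 ≤ u → u ≤ s → x.1 q ≠ M.hp h u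

/-- A single particle can move inside a path-connected set avoiding the other particles. -/
lemma exists_move {x : Conf Γ n} {p : Fin n} {S : Set Γ} {y : Γ} (hS : JoinedIn S (x.1 p) y)
    (hx : ∀ q, q ≠ p → x.1 q ∉ S) :
    ∃ x' : Conf Γ n, Joined x x' ∧ x'.1 p = y ∧ ∀ q, q ≠ p → x'.1 q = x.1 q := by
  obtain ⟨γ, hγ⟩ := hS
  have hinj : ∀ t, Function.Injective (Function.update x.1 p (γ t)) := by
    intro t q r hqr
    by_cases hq : q = p <;> by_cases hr : r = p
    · rw [hq, hr]
    · subst hq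
      rw [Function.update_self, Function.update_of_ne hr] at hqr
      exact absurd (hqr ▸ hγ t) (hx r hr)
    · subst hr
      rw [Function.update_self, Function.update_of_ne hq] at hqr
      exact absurd (hqr ▸ hγ t) (hx q hq)
    · rw [Function.update_of_ne hr, Function.update_of_ne hq] at hqr
      exact x.2 hqr
  refine ⟨⟨_, hinj 1⟩, ⟨⟨⟨fun t => ⟨_, hinj t⟩, ?_⟩, ?_, ?_⟩⟩, ?_, ?_⟩
  · exact Continuous.subtype_mk (continuous_const.update p γ.continuous) _
  · apply Subtype.ext
    simp
  · rfl
  · simp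
  · intro q hq
    simp [hq]

/-- A particle can move along a half-edge `h` to the vertex, and out along a half-edge `k`, when
both ways are clear. -/
lemma exists_cross {x : Conf Γ n} {p : Fin n} {h k : M.E × Bool} {s r : ℝ} (hs : 0 ≤ s)
    (hr : 0 ≤ r) (hx : x.1 p = M.hp h s) (hhk : M.hp h 0 = M.hp k 0)
    (c1 : M.Clear x p h s) (c2 : M.Clear x p k r) :
    ∃ x' : Conf Γ n, Joined x x' ∧ x'.1 p = M.hp k r ∧ ∀ q, q ≠ p → x'.1 q = x.1 q := by
  have key : ∀ (h : M.E × Bool) {s : ℝ}, 0 ≤ s →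
      JoinedIn (M.hp h '' Set.Icc 0 s) (M.hp h 0) (M.hp h s) := by
    intro h s hs
    have h1 : IsPathConnected (Set.Icc (0 : ℝ) s) :=
      (convex_Icc 0 s).isPathConnected ⟨0, by simp [hs]⟩
    exact (h1.image (M.hp_cont h)).joinedIn _ ⟨0, by simp [hs]⟩ _ ⟨s, by simp [hs]⟩
  refine exists_move (S := M.hp h '' Set.Icc 0 s ∪ M.hp k '' Set.Icc 0 r) ?_ ?_
  · rw [hx]
    refine JoinedIn.trans ((key h hs).symm.mono Set.subset_union_left) ?_
    rw [hhk]
    exact (key k hr).mono Set.subset_union_right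
  · rintro q hq (⟨u, hu, h1⟩ | ⟨u, hu, h1⟩)
    · exact c1 q hq u hu.1 hu.2 h1.symm
    · exact c2 q hq u hu.1 hu.2 h1.symm

/-- A sufficiently short piece of a half-edge starting at a free vertex is clear. -/
lemma exists_clear (x : Conf Γ n) (p : Fin n) (k : M.E × Bool)
    (h0 : ∀ q, q ≠ p → x.1 q ≠ M.hp k 0) : ∃ r, (0 < r ∧ r < 1) ∧ M.Clear x p k r := by
  have h1 : ∀ q, ∃ ε : ℝ, 0 < ε ∧ (q ≠ p → ∀ u, 0 ≤ u → u ≤ ε → x.1 q ≠ M.hp k u) := by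
    intro q
    by_cases hq : ∃ u, (0 < u ∧ u < 1) ∧ x.1 q = M.hp k u
    · obtain ⟨u, hu, hu'⟩ := hq
      refine ⟨u / 2, by linarith, fun _ v hv hv' e => ?_⟩
      rw [hu'] at e
      have := M.hp_same hu ⟨hv, by linarith⟩ e
      linarith
    · refine ⟨1 / 2, by norm_num, fun hqp v hv hv' e => ?_⟩
      rcases hv.eq_or_lt with h | h
      · subst h
        exact h0 q hqp e
      · exact hq ⟨v, ⟨h, by linarith⟩, e⟩
  choose ε hε hε' using h1
  have hne : (Finset.univ : Finset (Fin n)).Nonempty := ⟨p, Finset.mem_univ p⟩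
  refine ⟨min (1 / 2) (Finset.univ.inf' hne ε), ⟨?_, ?_⟩, ?_⟩
  · refine lt_min (by norm_num) ?_
    rw [Finset.lt_inf'_iff]
    exact fun q _ => hε q
  · exact (min_le_left _ _).trans_lt (by norm_num)
  · intro q hq u hu hu'
    exact hε' q hq u hu (hu'.trans ((min_le_right _ _).trans
      (Finset.inf'_le _ (Finset.mem_univ q))))

/-- If some particle lies on the half-edge `h`, at distance `s` from its free starting vertex, then
some particle at distance at most `s` has a clear way to that vertex. -/
lemma exists_closest (x : Conf Γ n) (h : M.E × Bool) (h0 : ∀ q, x.1 q ≠ M.hp h 0) {p : Fin n}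
    {s : ℝ} (hs : 0 < s ∧ s < 1) (hp : x.1 p = M.hp h s) :
    ∃ q u, (0 < u ∧ u ≤ s) ∧ x.1 q = M.hp h u ∧ M.Clear x q h u := by
  classical
  let T := Finset.univ.filter fun q => ∃ u, (0 < u ∧ u ≤ s) ∧ x.1 q = M.hp h u
  have hT : ∀ q, q ∈ T ↔ ∃ u, (0 < u ∧ u ≤ s) ∧ x.1 q = M.hp h u := by simp [T]
  choose! w hw hw' using fun q => (hT q).1
  obtain ⟨q, hq, hmin⟩ := T.exists_min_image w ⟨p, (hT p).2 ⟨s, ⟨hs.1, le_rfl⟩, hp⟩⟩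
  refine ⟨q, w q, hw q hq, hw' q hq, fun r hr u hu hu' e => ?_⟩
  have hq1 := hw q hq
  rcases hu.eq_or_lt with h1 | h1
  · subst h1
    exact h0 r e
  · have hrT : r ∈ T := (hT r).2 ⟨u, ⟨h1, by linarith⟩, e⟩
    have h2 := hmin r hrT
    have h3 : w r = u := M.hp_same ⟨h1, by linarith⟩ ⟨(hw r hrT).1.le, by linarith [(hw r hrT).2]⟩
      (by rw [← e, ← hw' r hrT])
    exact hr (x.2 (by rw [e, hw' q hq]; congr 1; linarith))

lemma interior_or_vertex (y : Γ) : (∃ h : M.E × Bool, y = M.hp h 0) ∨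
    ∃ e, ∀ b, ∃ s, (0 < s ∧ s < 1) ∧ y = M.hp (e, b) s := by
  obtain ⟨e, t, ht, rfl⟩ := M.surj y
  rcases ht.1.eq_or_lt with h | h
  · exact Or.inl ⟨(e, false), by simp [hp, h]⟩
  rcases ht.2.eq_or_lt with h' | h'
  · exact Or.inl ⟨(e, true), by simp [hp, h']⟩
  refine Or.inr ⟨e, fun b => ?_⟩
  cases b
  · exact ⟨t, ⟨h, h'⟩, by simp [hp]⟩
  · exact ⟨1 - t, ⟨by linarith, by linarith⟩, by simp [hp]⟩

/-- Every configuration can be moved so that all particles lie inside a prescribed edge: particles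
at vertices step aside, and then particles move one by one to edges closer to the given one. -/
lemma exists_gather [T2Space Γ] [ConnectedSpace Γ] (a : M.E × Bool) (x : Conf Γ n) :
    ∃ x' : Conf Γ n, Joined x x' ∧ ∀ p, ∃ s, (0 < s ∧ s < 1) ∧ x'.1 p = M.hp a s := by
  classical
  obtain ⟨D, hD⟩ := M.exists_edge_dist a.1
  obtain ⟨B, hB⟩ : ∃ B, ∀ e, D e < B :=
    ⟨Finset.univ.sup D + 1, fun e => Nat.lt_succ_of_le (Finset.le_sup (Finset.mem_univ e))⟩
  let φ : Γ → ℕ := fun y => if ∃ h, y = M.hp h 0 then B else D (M.ed y)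
  have hφ1 : ∀ h, φ (M.hp h 0) = B := fun h => if_pos ⟨h, rfl⟩
  have hφ2 : ∀ h s, (0 < s ∧ s < 1) → φ (M.hp h s) = D h.1 := by
    intro h s hs
    have h1 : ¬ ∃ k, M.hp h s = M.hp k 0 := by
      rintro ⟨k, hk⟩
      rcases M.hp_inj hs (by norm_num) hk with h2 | h2 <;> linarith [h2.2]
    have h2 : M.ed (M.hp h s) = h.1 := by
      have h3 := M.c_ed_par (M.hp h s)
      have h4 := M.par_mem (M.hp h s)
      exact M.hp_edge (k := (M.ed (M.hp h s), false)) (r := M.par (M.hp h s)) hs h4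
        (by simpa [hp] using h3.symm)
    change (if _ then _ else _) = _
    rw [if_neg h1, h2]
  generalize hN : ∑ p, φ (x.1 p) = N
  induction N using Nat.strong_induction_on generalizing x with
  | _ N ih =>
  -- a move of one particle which decreases `φ` reduces to a smaller case
  have step : ∀ (p : Fin n) (x' : Conf Γ n), Joined x x' → φ (x'.1 p) < φ (x.1 p) →
      (∀ q, q ≠ p → x'.1 q = x.1 q) →
      ∃ x' : Conf Γ n, Joined x x' ∧ ∀ p, ∃ s, (0 < s ∧ s < 1) ∧ x'.1 p = M.hp a s := by
    intro p x' hj hlt hq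
    have hlt' : ∑ p, φ (x'.1 p) < N := by
      rw [← hN]
      refine Finset.sum_lt_sum (fun q _ => ?_) ⟨p, Finset.mem_univ p, hlt⟩
      by_cases h : q = p
      · rw [h]; exact hlt.le
      · rw [hq q h]
    obtain ⟨x'', h1, h2⟩ := ih _ hlt' x' rfl
    exact ⟨x'', hj.trans h1, h2⟩
  by_cases hv : ∃ p h, x.1 p = M.hp h 0
  · obtain ⟨p, h, hp⟩ := hv
    have h0 : ∀ q, q ≠ p → x.1 q ≠ M.hp h 0 := fun q hq e => hq (x.2 (e.trans hp.symm))
    obtain ⟨r, hr, hc⟩ := M.exists_clear x p h h0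
    obtain ⟨x', h1, h2, h3⟩ := M.exists_cross le_rfl hr.1.le hp rfl
      (fun q hq u hu hu' => by rw [le_antisymm hu' hu]; exact h0 q hq) hc
    refine step p x' h1 ?_ h3
    rw [h2, hp, hφ1, hφ2 _ _ hr]
    exact hB _
  push Not at hv
  by_cases ha : ∃ p, M.ed (x.1 p) ≠ a.1
  · obtain ⟨p, hp⟩ := ha
    obtain ⟨h, k, h1, h2, h3⟩ := hD _ hp
    obtain ⟨e, he⟩ := (M.interior_or_vertex (x.1 p)).resolve_left
      (fun ⟨h, hh⟩ => hv p h hh)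
    have he' : e = h.1 := by
      obtain ⟨s, hs, hs'⟩ := he false
      have h3 := M.c_ed_par (x.1 p)
      have h4 := M.par_mem (x.1 p)
      rw [h1]
      exact (M.hp_edge (k := (M.ed (x.1 p), false)) (r := M.par (x.1 p)) hs h4
        (by rw [← hs']; simpa [GModel.hp] using h3.symm)).symm
    obtain ⟨s, hs, hs'⟩ := he h.2
    rw [he'] at hs'
    obtain ⟨q, u, hu, hu', hc⟩ := M.exists_closest x h (fun q => hv q h) hs hs'
    obtain ⟨r, hr, hc'⟩ := M.exists_clear x q k (fun q _ => hv q k)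
    obtain ⟨x', h5, h6, h7⟩ := M.exists_cross hu.1.le hr.1.le hu' h2 hc hc'
    refine step q x' h5 ?_ h7
    rw [h6, hu', hφ2 _ _ hr, hφ2 _ _ ⟨hu.1, by linarith [hu.2]⟩, h1]
    exact h3
  · push Not at ha
    refine ⟨x, Joined.refl x, fun p => ?_⟩
    obtain ⟨e, he⟩ := (M.interior_or_vertex (x.1 p)).resolve_left
      (fun ⟨h, hh⟩ => hv p h hh)
    have he' : e = a.1 := by
      obtain ⟨s, hs, hs'⟩ := he false
      have h3 := M.c_ed_par (x.1 p)
      have h4 := M.par_mem (x.1 p)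
      rw [← ha p]
      exact (M.hp_edge (k := (M.ed (x.1 p), false)) (r := M.par (x.1 p)) hs h4
        (by rw [← hs']; simpa [GModel.hp] using h3.symm)).symm
    obtain ⟨s, hs, hs'⟩ := he a.2
    exact ⟨s, hs, by rw [hs', he']⟩

/-- The configuration with two particles exchanged. -/
def swapConf (x : Conf Γ n) (p q : Fin n) : Conf Γ n :=
  ⟨x.1 ∘ Equiv.swap p q, x.2.comp (Equiv.swap p q).injective⟩

/-- Two particles consecutive on the half-edge `a` can be exchanged, by means of two further
half-edges `b`, `c` at the same vertex. The particles in front of them are first parked on `b`;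
then `p` waits on `b` and `q` on `c`, and they return in the opposite order. The half-edges `b`, `c`
may be the two ends of a loop. -/
lemma joined_swap {a b c : M.E × Bool} (hab : M.hp a 0 = M.hp b 0) (hac : M.hp a 0 = M.hp c 0)
    (hbc : b ≠ c) (hb : b.1 ≠ a.1) (hc : c.1 ≠ a.1) {p q : Fin n} {s t : ℝ} (hs : 0 < s)
    (hst : s < t) (ht : t < 1) (x : Conf Γ n) (h0 : ∀ r, x.1 r ≠ M.hp a 0)
    (hp : x.1 p = M.hp a s) (hq : x.1 q = M.hp a t)
    (hbet : ∀ r, r ≠ p → r ≠ q → ∀ u, s ≤ u → u ≤ t → x.1 r ≠ M.hp a u) :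
    Joined x (swapConf x p q) := by
  classical
  generalize hN : (Finset.univ.filter fun r => ∃ u, (0 < u ∧ u < s) ∧ x.1 r = M.hp a u).card = N
  induction N using Nat.strong_induction_on generalizing x with
  | _ N ih =>
  have hpq : p ≠ q := by
    rintro rfl
    have := M.hp_same ⟨hs, by linarith⟩ ⟨by linarith, ht.le⟩ (hp.symm.trans hq)
    linarith
  by_cases hfr : ∃ r u, (0 < u ∧ u < s) ∧ x.1 r = M.hp a u
  · -- park the first particle `r` on `b`, use the induction hypothesis, and move `r` back
    obtain ⟨r₀, u₀, hu₀, hr₀⟩ := hfr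
    obtain ⟨r, u, hu, hr, hcl⟩ := M.exists_closest x a h0 ⟨hu₀.1, by linarith⟩ hr₀
    have hus : u < s := hu.2.trans_lt hu₀.2
    have hrp : r ≠ p := by
      rintro rfl
      have := M.hp_same ⟨hs, by linarith⟩ ⟨hu.1.le, by linarith⟩ (hp.symm.trans hr)
      linarith
    have hrq : r ≠ q := by
      rintro rfl
      have := M.hp_same ⟨by linarith, ht⟩ ⟨hu.1.le, by linarith⟩ (hq.symm.trans hr)
      linarith
    obtain ⟨β, hβ, hclb⟩ := M.exists_clear x r b (fun q _ => hab ▸ h0 q)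
    obtain ⟨x1, hj, h1, h2⟩ := M.exists_cross hu.1.le hβ.1.le hr hab hcl hclb
    have hne : ∀ v, 0 ≤ v → v ≤ 1 → x1.1 r ≠ M.hp a v := by
      intro v hv hv' e
      exact hb (M.hp_edge hβ ⟨hv, hv'⟩ (h1.symm.trans e)).symm
    have hlt : (Finset.univ.filter fun r => ∃ u, (0 < u ∧ u < s) ∧ x1.1 r = M.hp a u).card < N := by
      rw [← hN]
      refine Finset.card_lt_card ((Finset.ssubset_iff_of_subset ?_).2 ⟨r, ?_, ?_⟩)
      · intro r' hr'
        simp only [Finset.mem_filter, Finset.mem_univ, true_and] at hr' ⊢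
        obtain ⟨v, hv, hv'⟩ := hr'
        by_cases h : r' = r
        · subst h
          exact absurd hv' (hne v hv.1.le (by linarith))
        · exact ⟨v, hv, by rw [← h2 r' h, hv']⟩
      · simp only [Finset.mem_filter, Finset.mem_univ, true_and]
        exact ⟨u, ⟨hu.1, hus⟩, hr⟩
      · simp only [Finset.mem_filter, Finset.mem_univ, true_and]
        rintro ⟨v, hv, hv'⟩
        exact hne v hv.1.le (by linarith) hv'
    have hj2 := ih _ hlt x1 (fun r' => by
        by_cases h : r' = r
        · subst h
          exact hne 0 le_rfl (by norm_num)
        · rw [h2 r' h]; exact h0 r')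
      (by rw [h2 p hrp.symm, hp]) (by rw [h2 q hrq.symm, hq])
      (fun r' hr'p hr'q v hv hv' => by
        by_cases h : r' = r
        · subst h
          exact hne v (by linarith) (by linarith)
        · rw [h2 r' h]; exact hbet r' hr'p hr'q v hv hv') rfl
    have hsw : ∀ r', r' ≠ r → Equiv.swap p q r' ≠ r := by
      intro r' h e
      apply h
      rw [← Equiv.swap_apply_self p q r', e, Equiv.swap_apply_of_ne_of_ne hrp hrq]
    have hsr : Equiv.swap p q r = r := Equiv.swap_apply_of_ne_of_ne hrp hrq
    obtain ⟨x2, hj3, h3, h4⟩ := M.exists_cross (x := swapConf x1 p q) (p := r) (h := b) (k := a)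
      hβ.1.le hu.1.le (by simp [swapConf, hsr, h1]) hab.symm
      (fun r' h v hv hv' => by
        simp only [swapConf, Function.comp]
        rw [h2 _ (hsw r' h)]
        exact hclb _ (hsw r' h) v hv hv')
      (fun r' h v hv hv' => by
        simp only [swapConf, Function.comp]
        rw [h2 _ (hsw r' h)]
        exact hcl _ (hsw r' h) v hv hv')
    have h5 : x2 = swapConf x p q := by
      apply Subtype.ext
      funext r'
      by_cases h : r' = r
      · subst h
        rw [h3]
        simp [swapConf, hsr, hr]
      · rw [h4 r' h]
        simp only [swapConf, Function.comp]
        exact h2 _ (hsw r' h)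
    exact h5 ▸ (hj.trans hj2).trans hj3
  · push Not at hfr
    have hcs : ∀ r, r ≠ p → r ≠ q → ∀ u, 0 ≤ u → u ≤ t → x.1 r ≠ M.hp a u := by
      intro r hrp hrq u hu hu'
      rcases hu.eq_or_lt with h | h
      · rw [← h]; exact h0 r
      rcases lt_or_ge u s with h1 | h1
      · exact hfr r u ⟨h, h1⟩
      · exact hbet r hrp hrq u h1 hu'
    have hclp : M.Clear x p a s := by
      intro r hr u hu hu' e
      by_cases h : r = q
      · subst h
        have := M.hp_same ⟨by linarith, ht⟩ ⟨hu, by linarith⟩ (hq.symm.trans e)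
        linarith
      · exact hcs r hr h u hu (by linarith) e
    obtain ⟨β, hβ, hclb⟩ := M.exists_clear x p b (fun q _ => hab ▸ h0 q)
    obtain ⟨x1, j1, p1, o1⟩ := M.exists_cross hs.le hβ.1.le hp hab hclp hclb
    have hnb : ∀ v, 0 ≤ v → v ≤ 1 → M.hp b β ≠ M.hp a v := fun v hv hv' e =>
      hb (M.hp_edge hβ ⟨hv, hv'⟩ e).symm
    obtain ⟨γ, hγ, hclc⟩ := M.exists_clear x1 q c (fun r hr => by
      rw [← hac]
      by_cases h : r = p
      · subst h
        rw [p1]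
        exact hnb 0 le_rfl (by norm_num)
      · rw [o1 r h]; exact h0 r)
    have hnc : ∀ v, 0 ≤ v → v ≤ 1 → M.hp c γ ≠ M.hp a v := fun v hv hv' e =>
      hc (M.hp_edge hγ ⟨hv, hv'⟩ e).symm
    obtain ⟨x2, j2, p2, o2⟩ := M.exists_cross (x := x1) (p := q) (h := a) (k := c) (s := t) (r := γ)
      (by linarith) hγ.1.le (by rw [o1 q hpq.symm, hq]) hac
      (fun r hr u hu hu' => by
        by_cases h : r = p
        · subst h
          rw [p1]
          exact hnb u hu (by linarith)
        · rw [o1 r h]; exact hcs r h hr u hu hu') hclc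
    obtain ⟨x3, j3, p3, o3⟩ := M.exists_cross (x := x2) (p := p) (h := b) (k := a) (s := β) (r := t)
      hβ.1.le (by linarith) (by rw [o2 p hpq, p1]) hab.symm
      (fun r hr u hu hu' e => by
        by_cases h : r = q
        · -- on a common loop, `b` and `c` are opposite ends, and `p` is not on the way of `q`
          subst h
          rw [p2] at e
          rcases M.hp_inj hγ ⟨hu, by linarith⟩ e with h1 | ⟨h1, h2⟩
          · exact hbc h1.1
          · refine hclc p hpq (1 - β) (by linarith) (by linarith) ?_
            rw [p1, h1, M.hp_flip]
        · rw [o2 r h, o1 r hr] at e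
          exact hclb r hr u hu hu' e)
      (fun r hr u hu hu' => by
        by_cases h : r = q
        · subst h
          rw [p2]
          exact hnc u hu (by linarith)
        · rw [o2 r h, o1 r hr]
          exact hcs r hr h u hu hu')
    obtain ⟨x4, j4, p4, o4⟩ := M.exists_cross (x := x3) (p := q) (h := c) (k := a) (s := γ) (r := s)
      hγ.1.le hs.le (by rw [o3 q hpq.symm, p2]) hac.symm
      (fun r hr u hu hu' e => by
        by_cases h : r = p
        · subst h
          rw [p3] at e
          exact hc (M.hp_edge ⟨by linarith, ht⟩ ⟨hu, by linarith⟩ e)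
        · rw [o3 r h] at e
          rw [o2 r hr] at e
          exact hclc r hr u hu hu' (by rw [← e]))
      (fun r hr u hu hu' e => by
        by_cases h : r = p
        · subst h
          rw [p3] at e
          have := M.hp_same ⟨by linarith, ht⟩ ⟨hu, by linarith⟩ e
          linarith
        · rw [o3 r h, o2 r hr, o1 r h] at e
          exact hcs r h hr u hu (by linarith) e)
    have h5 : x4 = swapConf x p q := by
      apply Subtype.ext
      funext r
      simp only [swapConf, Function.comp]
      by_cases h : r = q
      · subst h
        rw [p4, Equiv.swap_apply_right, hp]
      · rw [o4 r h]
        by_cases h' : r = p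
        · subst h'
          rw [p3, Equiv.swap_apply_left, hq]
        · rw [o3 r h', o2 r h, o1 r h', Equiv.swap_apply_of_ne_of_ne h' h]
    exact h5 ▸ ((j1.trans j2).trans j3).trans j4

/-- Configurations inside one edge in which the particles have the same order are joined by linear
interpolation. -/
lemma joined_of_order {a : M.E × Bool} {x x' : Conf Γ n} {u u' : Fin n → ℝ}
    (hu : ∀ p, (0 < u p ∧ u p < 1) ∧ x.1 p = M.hp a (u p))
    (hu' : ∀ p, (0 < u' p ∧ u' p < 1) ∧ x'.1 p = M.hp a (u' p))
    (ho : ∀ p q, u p < u q → u' p < u' q) : Joined x x' := by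
  let w : ℝ → Fin n → ℝ := fun t p => (1 - t) * u p + t * u' p
  have hw : ∀ (t : I) p, 0 < w t p ∧ w t p < 1 := by
    intro t p
    have h := convex_Ioo (0 : ℝ) 1 (x := u p) (y := u' p) (hu p).1 (hu' p).1
      (a := 1 - (t : ℝ)) (b := (t : ℝ)) (by linarith [t.2.2]) t.2.1 (by ring)
    simpa [w] using h
  have hlt : ∀ (t : I) p q, u p < u q → w t p < w t q := by
    intro t p q h
    have h' := ho p q h
    have h1 := t.2.1
    have h2 := t.2.2
    simp only [w]
    rcases h1.eq_or_lt with h3 | h3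
    · rw [← h3]; linarith
    · have := mul_lt_mul_of_pos_left h' h3
      have := mul_le_mul_of_nonneg_left h.le (sub_nonneg.2 h2)
      linarith
  have hinj : ∀ t : I, Function.Injective fun p => M.hp a (w t p) := by
    intro t p q e
    have h1 := M.hp_same (hw t p) ⟨(hw t q).1.le, (hw t q).2.le⟩ e
    rcases lt_trichotomy (u p) (u q) with h | h | h
    · linarith [hlt t p q h]
    · exact x.2 (by rw [(hu p).2, (hu q).2, h])
    · linarith [hlt t q p h]
  refine ⟨⟨⟨fun t => ⟨_, hinj t⟩, ?_⟩, ?_, ?_⟩⟩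
  · refine Continuous.subtype_mk (continuous_pi fun p => (M.hp_cont a).comp ?_) _
    simp only [w]
    fun_prop
  · apply Subtype.ext
    funext p
    simp [w, (hu p).2]
  · apply Subtype.ext
    funext p
    simp [w, (hu' p).2]

lemma std_pos (r : Fin n) : 0 < ((r : ℕ) + 1 : ℝ) / (n + 1) ∧ ((r : ℕ) + 1 : ℝ) / (n + 1) < 1 := by
  have : ((r : ℕ) : ℝ) < n := by exact_mod_cast r.2
  refine ⟨by positivity, ?_⟩
  rw [div_lt_one (by positivity)]
  linarith

/-- The configuration on the half-edge `a` with equally spaced particles in the order given by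
`ρ`. -/
noncomputable def std (a : M.E × Bool) (ρ : Equiv.Perm (Fin n)) : Conf Γ n :=
  ⟨fun p => M.hp a (((ρ p : ℕ) + 1 : ℝ) / (n + 1)), fun p q e => by
    have h2 := M.hp_same (std_pos _) ⟨(std_pos _).1.le, (std_pos _).2.le⟩ e
    have h3 : (n + 1 : ℝ) ≠ 0 := by positivity
    have h4 : ((ρ q : ℕ) : ℝ) = (ρ p : ℕ) := by
      field_simp at h2
      linarith
    exact (ρ.injective (Fin.ext (by exact_mod_cast h4))).symm⟩

lemma joined_std {a b c : M.E × Bool} (hab : M.hp a 0 = M.hp b 0) (hac : M.hp a 0 = M.hp c 0)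
    (hbc : b ≠ c) (hb : b.1 ≠ a.1) (hc : c.1 ≠ a.1) (ρ : Equiv.Perm (Fin n)) :
    Joined (M.std a 1) (M.std a ρ) := by
  obtain _ | n := n
  · rw [Subsingleton.elim ρ 1]
  let K : Submonoid (Equiv.Perm (Fin (n + 1))) :=
    { carrier := {τ | ∀ ρ, Joined (M.std a ρ) (M.std a (τ * ρ))}
      one_mem' := fun ρ => by rw [one_mul]
      mul_mem' := fun {τ τ'} h h' ρ => by rw [mul_assoc]; exact (h' ρ).trans (h _) }
  have hK : K = ⊤ := by
    rw [← top_le_iff, ← Equiv.Perm.mclosure_swap_castSucc_succ, Submonoid.closure_le]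
    rintro _ ⟨i, rfl⟩ ρ
    have hn : (0 : ℝ) < (n + 1 : ℕ) + 1 := by positivity
    have key := M.joined_swap hab hac hbc hb hc (p := ρ.symm i.castSucc) (q := ρ.symm i.succ)
      (s := (((i.castSucc : Fin (n + 1)) : ℕ) + 1 : ℝ) / ((n + 1 : ℕ) + 1))
      (t := (((i.succ : Fin (n + 1)) : ℕ) + 1 : ℝ) / ((n + 1 : ℕ) + 1))
      (std_pos _).1 (by gcongr; simp) (std_pos _).2 (M.std a ρ) ?_ ?_ ?_ ?_
    · have h : swapConf (M.std a ρ) (ρ.symm i.castSucc) (ρ.symm i.succ) =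
          M.std a (Equiv.swap i.castSucc i.succ * ρ) := by
        apply Subtype.ext
        funext r
        have h1 : ρ (Equiv.swap (ρ.symm i.castSucc) (ρ.symm i.succ) r) =
            Equiv.swap i.castSucc i.succ (ρ r) := by
          rw [Equiv.swap_apply_def, Equiv.swap_apply_def]
          simp only [Equiv.eq_symm_apply]
          split_ifs <;> simp
        simp only [swapConf, std, Function.comp, Equiv.Perm.mul_apply]
        rw [h1]
      rw [← h]
      exact key
    · intro r e
      have := M.hp_same (std_pos (ρ r)) (by norm_num) e
      linarith [(std_pos (ρ r)).1]
    · simp [std]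
    · simp [std]
    · intro r hr1 hr2 u hu hu' e
      have h1 := M.hp_same (std_pos (ρ r))
        ⟨(std_pos _).1.le.trans hu, hu'.trans (std_pos _).2.le⟩ e
      rw [h1, div_le_div_iff_of_pos_right hn] at hu hu'
      have h2 : ((i.castSucc : Fin (n + 1)) : ℕ) ≤ (ρ r : ℕ) := by
        have : (((i.castSucc : Fin (n + 1)) : ℕ) : ℝ) ≤ ((ρ r : ℕ) : ℝ) := by linarith
        exact_mod_cast this
      have h3 : (ρ r : ℕ) ≤ ((i.succ : Fin (n + 1)) : ℕ) := by
        have : ((ρ r : ℕ) : ℝ) ≤ (((i.succ : Fin (n + 1)) : ℕ) : ℝ) := by linarith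
        exact_mod_cast this
      rw [Ne, Equiv.eq_symm_apply, Fin.ext_iff] at hr1 hr2
      simp at h2 h3 hr1 hr2
      omega
  have h := (hK ▸ Submonoid.mem_top ρ : ρ ∈ K) 1
  rwa [mul_one] at h

/-- A vertex of degree at least three has half-edges `a`, `b`, `c` such that the edge of `a` is
different from those of `b` and `c`. -/
lemma exists_three {v : Γ} (hv : v ∈ M.Ess) : ∃ a b c : M.E × Bool, M.hp a 0 = v ∧
    M.hp b 0 = v ∧ M.hp c 0 = v ∧ b ≠ c ∧ b.1 ≠ a.1 ∧ c.1 ≠ a.1 := by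
  have h1 : 2 < (M.halves v).ncard := hv
  rw [Set.two_lt_ncard (Set.toFinite _)] at h1
  obtain ⟨⟨a, i⟩, ha, ⟨b, j⟩, hb, ⟨c, k⟩, hc, hab, hac, hbc⟩ := h1
  have ha : M.hp (a, i) 0 = v := ha
  have hb : M.hp (b, j) 0 = v := hb
  have hc : M.hp (c, k) 0 = v := hc
  by_cases h1 : a = b
  · refine ⟨_, _, _, hc, ha, hb, hab, ?_, ?_⟩ <;> rintro h2 <;> simp at h2 <;>
      subst h1 <;> subst h2 <;> revert hab hac hbc <;> cases i <;> cases j <;> cases k <;> simp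
  · by_cases h2 : a = c
    · refine ⟨_, _, _, hb, ha, hc, hac, h1, ?_⟩
      rintro h3
      exact h1 (h2.trans h3)
    · exact ⟨_, _, _, ha, hb, hc, hbc, fun h => h1 h.symm, fun h => h2 h.symm⟩

theorem joined_all [T2Space Γ] [ConnectedSpace Γ] (hE : M.Ess.Nonempty) (x y : Conf Γ n) :
    Joined x y := by
  obtain ⟨v, hv⟩ := hE
  obtain ⟨a, b, c, ha, hb, hc, h1, h2, h3⟩ := M.exists_three hv
  suffices h : ∀ x : Conf Γ n, Joined (M.std a 1) x from (h x).symm.trans (h y)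
  intro x
  obtain ⟨x', hj, hx'⟩ := M.exists_gather a x
  choose u hu hux using hx'
  refine Joined.trans ?_ hj.symm
  refine (M.joined_std (ha.trans hb.symm) (ha.trans hc.symm) h1 h2 h3 (Tuple.sort u)⁻¹).trans ?_
  refine M.joined_of_order (a := a)
    (u := fun p => ((((Tuple.sort u)⁻¹ p : Fin n) : ℕ) + 1 : ℝ) / (n + 1)) (u' := u)
    (fun p => ⟨std_pos _, rfl⟩) (fun p => ⟨hu p, hux p⟩) ?_
  intro p q hpq
  have hn : (0 : ℝ) < n + 1 := by positivity
  rw [div_lt_div_iff_of_pos_right hn] at hpq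
  have hlt : (Tuple.sort u)⁻¹ p < (Tuple.sort u)⁻¹ q := by
    have : (((Tuple.sort u)⁻¹ p : Fin n) : ℕ) < (((Tuple.sort u)⁻¹ q : Fin n) : ℕ) := by
      have : ((((Tuple.sort u)⁻¹ p : Fin n) : ℕ) : ℝ) < (((Tuple.sort u)⁻¹ q : Fin n) : ℕ) := by
        linarith
      exact_mod_cast this
    exact this
  have h4 := Tuple.monotone_sort u hlt.le
  have h5 : ∀ r, Tuple.sort u ((Tuple.sort u)⁻¹ r) = r := (Tuple.sort u).apply_symm_apply
  simp only [Function.comp, h5] at h4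
  refine lt_of_le_of_ne h4 fun e => hlt.ne ?_
  rw [x'.2 (by rw [hux p, hux q, e] : x'.1 p = x'.1 q)]

end Conn

/-! ### Removing vertices of degree two -/

section Merge

lemma hp_inj_full {h k : M.E × Bool} {s r : ℝ} (hs : 0 ≤ s ∧ s ≤ 1) (hr : 0 ≤ r ∧ r ≤ 1)
    (e : M.hp h s = M.hp k r) : (k = h ∧ r = s) ∨ (k = flip h ∧ r = 1 - s) ∨
      ((s = 0 ∨ s = 1) ∧ (r = 0 ∨ r = 1)) := by
  have key : ∀ {t : ℝ}, (0 ≤ t ∧ t ≤ 1) → ¬ (0 < t ∧ t < 1) → t = 0 ∨ t = 1 := by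
    intro t ht h
    by_contra! h'
    exact h ⟨lt_of_le_of_ne ht.1 h'.1.symm, lt_of_le_of_ne ht.2 h'.2⟩
  by_cases h1 : 0 < s ∧ s < 1
  · exact (M.hp_inj h1 hr e).imp_right Or.inl
  by_cases h2 : 0 < r ∧ r < 1
  · rcases M.hp_inj h2 hs e.symm with h | h
    · exact Or.inl ⟨h.1.symm, h.2.symm⟩
    · refine Or.inr (Or.inl ⟨?_, by linarith [h.2]⟩)
      rw [h.1]; simp [flip]
  · exact Or.inr (Or.inr ⟨key hs h1, key hr h2⟩)

/-- The union of the edges of `h₁` and `h₂` as a single edge, running through their common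
end point at parameter `1/2`. -/
noncomputable def glue (h₁ h₂ : M.E × Bool) (t : ℝ) : Γ :=
  if t ≤ 1 / 2 then M.hp h₁ (1 - 2 * t) else M.hp h₂ (2 * t - 1)

variable {M}

lemma glue_spec {h₁ h₂ : M.E × Bool} {t : ℝ} (ht : 0 ≤ t ∧ t ≤ 1) :
    ∃ h s, (0 ≤ s ∧ s ≤ 1) ∧ M.glue h₁ h₂ t = M.hp h s ∧
      ((h = h₁ ∧ t = (1 - s) / 2) ∨ (h = h₂ ∧ t = (1 + s) / 2)) := by
  unfold glue
  split_ifs with h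
  · exact ⟨h₁, 1 - 2 * t, ⟨by linarith, by linarith [ht.1]⟩, rfl, Or.inl ⟨rfl, by ring⟩⟩
  · push Not at h
    exact ⟨h₂, 2 * t - 1, ⟨by linarith, by linarith [ht.2]⟩, rfl, Or.inr ⟨rfl, by ring⟩⟩

lemma flip_ne {E : Type} (h : E × Bool) : flip h ≠ h := fun e => by
  simpa [flip] using congrArg Prod.snd e

lemma glue_left {h₁ h₂ : M.E × Bool} {s : ℝ} (hs : 0 ≤ s) :
    M.glue h₁ h₂ ((1 - s) / 2) = M.hp h₁ s := by
  unfold glue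
  rw [if_pos (by linarith)]
  congr 1
  ring

lemma glue_right {h₁ h₂ : M.E × Bool} (h : M.hp h₁ 0 = M.hp h₂ 0) {s : ℝ} (hs : 0 ≤ s) :
    M.glue h₁ h₂ ((1 + s) / 2) = M.hp h₂ s := by
  rcases hs.eq_or_lt with h0 | h0
  · subst h0
    simp [glue, h]
  · unfold glue
    rw [if_neg (by linarith)]
    congr 1
    ring

/-- If exactly the two half-edges `h₁`, `h₂`, on distinct edges, issue from `y`, then `y` lies on
either of them only as its starting point. -/
lemma two_halves_vertex {h₁ h₂ h : M.E × Bool} {y : Γ} (hy : M.halves y = {h₁, h₂})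
    (hne : h₁.1 ≠ h₂.1) (hh : h = h₁ ∨ h = h₂) {s : ℝ} (hs : 0 ≤ s ∧ s ≤ 1)
    (e : M.hp h s = y) : s = 0 := by
  have hmem : ∀ k, M.hp k 0 = y ↔ k = h₁ ∨ k = h₂ := by
    intro k
    have : k ∈ M.halves y ↔ k ∈ ({h₁, h₂} : Set _) := by rw [hy]
    simpa [halves] using this
  have h0 : M.hp h 0 = y := (hmem h).2 hh
  rcases M.hp_inj_full hs (by norm_num) (e.trans h0.symm) with h1 | h1 | h1
  · exact h1.2.symm
  · exact absurd h1.1.symm (flip_ne h)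
  · refine h1.1.resolve_right fun h2 => ?_
    have h3 : M.hp (flip h) 0 = y := by rw [hp_flip, ← e, h2]; simp
    rcases (hmem _).1 h3 with h4 | h4 <;> rcases hh with h5 | h5 <;> rw [h5] at h4
    · exact flip_ne _ h4
    · exact hne (congrArg Prod.fst h4 : (flip h₂).1 = h₁.1).symm
    · exact hne (congrArg Prod.fst h4 : (flip h₁).1 = h₂.1)
    · exact flip_ne _ h4

variable (M)

/-- Merging the two edges at a vertex `y` of degree two. -/
lemma exists_merge {h₁ h₂ : M.E × Bool} {y : Γ} (hy : M.halves y = {h₁, h₂})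
    (hne : h₁.1 ≠ h₂.1) : ∃ M' : GModel Γ, M'.Ess = M.Ess ∧
      Fintype.card M'.E < Fintype.card M.E := by
  classical
  have hmem : ∀ k, M.hp k 0 = y ↔ k = h₁ ∨ k = h₂ := by
    intro k
    have : k ∈ M.halves y ↔ k ∈ ({h₁, h₂} : Set _) := by rw [hy]
    simpa [halves] using this
  have hy1 : M.hp h₁ 0 = y := (hmem _).2 (Or.inl rfl)
  have hy2 : M.hp h₂ 0 = y := (hmem _).2 (Or.inr rfl)
  have hhp : ∀ e b t, M.hp (e, b) (if b then 1 - t else t) = M.c e t := by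
    intro e b t; cases b <;> simp [hp]
  -- a glued edge meets the other edges only at end points
  have hmix : ∀ t f r, (0 ≤ t ∧ t ≤ 1) → (0 ≤ r ∧ r ≤ 1) → f ≠ h₁.1 → f ≠ h₂.1 →
      M.glue h₁ h₂ t = M.c f r → (t = 0 ∨ t = 1) ∧ (r = 0 ∨ r = 1) := by
    intro t f r ht hr hf1 hf2 e
    obtain ⟨h, s, hs, h1, h2⟩ := M.glue_spec (h₁ := h₁) (h₂ := h₂) ht
    have hh : h = h₁ ∨ h = h₂ := h2.imp And.left And.left
    have hfh : f ≠ h.1 := by rcases hh with h | h <;> rw [h] <;> assumption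
    rw [h1] at e
    rcases M.hp_inj_full (k := (f, false)) hs hr (by simpa [hp] using e) with h3 | h3 | h3
    · exact absurd (congrArg Prod.fst h3.1) hfh
    · exact absurd (congrArg Prod.fst h3.1) hfh
    · refine ⟨?_, h3.2⟩
      rcases h3.1 with h4 | h4
      · exfalso
        have h5 : M.hp h s = y := by rw [h4]; exact (hmem h).2 hh
        have h6 : ∃ b, M.hp (f, b) 0 = y := by
          rcases h3.2 with h6 | h6
          · exact ⟨false, by rw [← h5, e, h6]; simp [hp]⟩
          · exact ⟨true, by rw [← h5, e, h6]; simp [hp]⟩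
        obtain ⟨b, hb⟩ := h6
        rcases (hmem _).1 hb with h7 | h7
        · exact hf1 (congrArg Prod.fst h7)
        · exact hf2 (congrArg Prod.fst h7)
      · rcases h2 with h2 | h2
        · left; linarith [h2.2]
        · right; linarith [h2.2]
  let M' : GModel Γ :=
    { E := {e : M.E // e ≠ h₂.1}
      fin := inferInstance
      c := fun e => if e.1 = h₁.1 then M.glue h₁ h₂ else M.c e.1
      cont := by
        intro e
        split_ifs
        · unfold glue
          refine Continuous.if_le ((M.hp_cont _).comp (by fun_prop))
            ((M.hp_cont _).comp (by fun_prop)) continuous_id continuous_const ?_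
          intro t ht
          rw [ht]
          norm_num [hy1, hy2]
        · exact M.cont _
      surj := by
        intro z
        obtain ⟨e, t, ht, rfl⟩ := M.surj z
        by_cases h1 : e = h₁.1
        · refine ⟨⟨h₁.1, hne⟩, (1 - (if h₁.2 then 1 - t else t)) / 2, ?_, ?_⟩
          · split_ifs <;> constructor <;> linarith [ht.1, ht.2]
          · simp only [if_true]
            rw [glue_left (by split_ifs <;> linarith [ht.1, ht.2]), h1]
            exact hhp h₁.1 h₁.2 t
        · by_cases h2 : e = h₂.1
          · refine ⟨⟨h₁.1, hne⟩, (1 + (if h₂.2 then 1 - t else t)) / 2, ?_, ?_⟩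
            · split_ifs <;> constructor <;> linarith [ht.1, ht.2]
            · simp only [if_true]
              rw [glue_right (hy1.trans hy2.symm) (by split_ifs <;> linarith [ht.1, ht.2]), h2]
              exact hhp h₂.1 h₂.2 t
          · exact ⟨⟨e, h2⟩, t, ht, by simp only [if_neg h1]⟩
      inj := by
        rintro ⟨e, he⟩ ⟨f, hf⟩ t r ht hr h
        simp only at h
        by_cases h1 : e = h₁.1 <;> by_cases h2 : f = h₁.1
        · simp only [h1, h2, if_true] at h
          obtain ⟨h, s, hs, e1, e2⟩ := M.glue_spec (h₁ := h₁) (h₂ := h₂) ht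
          obtain ⟨k, s', hs', e1', e2'⟩ := M.glue_spec (h₁ := h₁) (h₂ := h₂) hr
          have hh : h = h₁ ∨ h = h₂ := e2.imp And.left And.left
          have hk : k = h₁ ∨ k = h₂ := e2'.imp And.left And.left
          rename_i heq
          rw [e1, e1'] at heq
          have hef : (⟨e, he⟩ : {e : M.E // e ≠ h₂.1}) = ⟨f, hf⟩ := Subtype.ext (h1.trans h2.symm)
          have hend : ∀ {h : M.E × Bool} {s t : ℝ},
              ((h = h₁ ∧ t = (1 - s) / 2) ∨ (h = h₂ ∧ t = (1 + s) / 2)) →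
              (s = 0 → t = 1 / 2) ∧ (s = 1 → t = 0 ∨ t = 1) := by
            rintro h s t (h1 | h1)
            · exact ⟨fun h => by linarith [h1.2], fun h => Or.inl (by linarith [h1.2])⟩
            · exact ⟨fun h => by linarith [h1.2], fun h => Or.inr (by linarith [h1.2])⟩
          have hmid : s = 0 ∨ s' = 0 → t = r := by
            have hz : s = 0 ↔ s' = 0 := by
              constructor
              · intro h0
                rw [h0, (hmem h).2 hh] at heq
                exact two_halves_vertex hy hne hk hs' heq.symm
              · intro h0
                rw [h0, (hmem k).2 hk] at heq
                exact two_halves_vertex hy hne hh hs heq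
            intro h0
            have h0' : s = 0 := h0.elim id hz.2
            rw [(hend e2).1 h0', (hend e2').1 (hz.1 h0')]
          rcases M.hp_inj_full hs hs' heq with h3 | h3 | ⟨h3, h4⟩
          · left
            refine ⟨hef, ?_⟩
            rcases e2 with e2 | e2 <;> rcases e2' with e2' | e2'
            · linarith [e2.2, e2'.2, h3.2]
            · exact absurd (by rw [← e2.1, ← e2'.1, h3.1]) hne
            · exact absurd (by rw [← e2.1, ← e2'.1, h3.1]) hne
            · linarith [e2.2, e2'.2, h3.2]
          · exfalso
            have h5 : k.1 = h.1 := by rw [h3.1]; rfl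
            have h6 : k = h := by
              rcases hh with hh | hh <;> rcases hk with hk | hk <;> rw [hh, hk] at h5 ⊢
              · exact absurd h5.symm hne
              · exact absurd h5 hne
            exact flip_ne h (h3.1.symm.trans h6)
          · rcases h3 with h3 | h3
            · exact Or.inl ⟨hef, hmid (Or.inl h3)⟩
            rcases h4 with h4 | h4
            · exact Or.inl ⟨hef, hmid (Or.inr h4)⟩
            · exact Or.inr ⟨(hend e2).2 h3, (hend e2').2 h4⟩
        · simp only [h1, h2, if_true, if_false] at h
          exact Or.inr (hmix t f r ht hr h2 hf h)
        · simp only [h1, h2, if_true, if_false] at h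
          exact Or.inr (hmix r e t hr ht h1 he h.symm).symm
        · simp only [h1, h2, if_false] at h
          exact (M.inj _ _ _ _ ht hr h).imp_left fun h => ⟨Subtype.ext h.1, h.2⟩ }
  -- the half-edges of the new graph are the half-edges of the old one other than `h₁`, `h₂`
  let Φ : M'.E × Bool → M.E × Bool := fun k =>
    if k.1.1 = h₁.1 then (if k.2 then flip h₂ else flip h₁) else (k.1.1, k.2)
  have hΦ : ∀ k, M'.hp k 0 = M.hp (Φ k) 0 := by
    rintro ⟨⟨e, he⟩, b⟩
    by_cases h1 : e = h₁.1
    · have h2 : ∀ t, M'.c ⟨e, he⟩ t = M.glue h₁ h₂ t := fun t => by simp [M', h1]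
      cases b
      · have := M.glue_left (h₁ := h₁) (h₂ := h₂) (s := 1) (by norm_num)
        norm_num at this
        simp only [Φ, h1, if_true]
        rw [if_neg (by simp), M.hp_flip, sub_zero, ← this, ← h2 0]
        simp [hp, h1]
      · have := glue_right (hy1.trans hy2.symm) (s := 1) (by norm_num)
        norm_num at this
        simp only [Φ, h1, if_true]
        rw [M.hp_flip, sub_zero, ← this, ← h2 1]
        simp [hp, h1]
    · have h2 : ∀ t, M'.c ⟨e, he⟩ t = M.c e t := fun t => by simp [M', h1]
      simp only [Φ, h1, if_false, hp, h2]
  have hΦinj : Function.Injective Φ := by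
    rintro ⟨⟨e, he⟩, b⟩ ⟨⟨f, hf⟩, b'⟩ h
    simp only [Φ] at h
    by_cases h1 : e = h₁.1 <;> by_cases h2 : f = h₁.1
    · subst h1; subst h2
      simp only [if_true] at h
      cases b <;> cases b' <;> simp [flip] at h ⊢
      · exact hne h.1
      · exact hne h.1.symm
    · simp only [h1, h2, if_true, if_false] at h
      have := congrArg Prod.fst h
      cases b <;> simp [flip] at this
      · exact absurd this.symm h2
      · exact absurd this.symm hf
    · simp only [h1, h2, if_true, if_false] at h
      have := congrArg Prod.fst h
      cases b' <;> simp [flip] at this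
      · exact absurd this h1
      · exact absurd this he
    · simp only [h1, h2, if_false, Prod.mk.injEq] at h
      obtain ⟨rfl, rfl⟩ := h
      rfl
  have hΦr : ∀ k, k ∈ Set.range Φ ↔ k ≠ h₁ ∧ k ≠ h₂ := by
    intro k
    constructor
    · rintro ⟨⟨⟨e, he⟩, b⟩, rfl⟩
      simp only [Φ]
      by_cases h1 : e = h₁.1
      · cases b <;> simp only [h1, if_true]
        · exact ⟨flip_ne _, fun h => hne (congrArg Prod.fst h : (flip h₁).1 = h₂.1)⟩
        · exact ⟨fun h => hne (congrArg Prod.fst h : (flip h₂).1 = h₁.1).symm, flip_ne _⟩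
      · simp only [h1, if_false]
        exact ⟨fun h => h1 (congrArg Prod.fst h), fun h => he (congrArg Prod.fst h)⟩
    · rintro ⟨k1, k2⟩
      have hfl : ∀ {h : M.E × Bool}, k ≠ h → k.1 = h.1 → flip h = k := by
        rintro ⟨e, b⟩ h1 h2
        rcases k with ⟨f, b'⟩
        simp only at h2
        subst h2
        cases b <;> cases b' <;> simp [flip] at h1 ⊢
      by_cases h1 : k.1 = h₁.1
      · exact ⟨(⟨h₁.1, hne⟩, false), by simpa [Φ] using hfl k1 h1⟩
      · by_cases h2 : k.1 = h₂.1
        · exact ⟨(⟨h₁.1, hne⟩, true), by simpa [Φ] using hfl k2 h2⟩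
        · exact ⟨(⟨k.1, h2⟩, k.2), by simp [Φ, h1]⟩
  have himg : ∀ v, Φ '' M'.halves v = M.halves v \ {h₁, h₂} := by
    intro v
    ext k
    constructor
    · rintro ⟨k', hk', rfl⟩
      refine ⟨(hΦ k').symm.trans hk', ?_⟩
      have := (hΦr (Φ k')).1 ⟨k', rfl⟩
      simpa using this
    · rintro ⟨hk, hk'⟩
      obtain ⟨k', rfl⟩ := (hΦr k).2 (by simpa using hk')
      exact ⟨k', (hΦ k').trans hk, rfl⟩
  refine ⟨M', ?_, ?_⟩
  · ext v
    change 3 ≤ _ ↔ 3 ≤ _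
    rw [← Set.ncard_image_of_injective _ hΦinj, himg]
    by_cases hv : v = y
    · subst hv
      rw [hy, Set.ncard_pair (fun h => hne (congrArg Prod.fst h))]
      simp
    · have h1 : M.halves v \ {h₁, h₂} = M.halves v := by
        refine sdiff_eq_left.2 (Set.disjoint_left.2 fun k hk hk' => hv ?_)
        exact Eq.trans (Eq.symm hk) ((hmem k).2 (by simpa using hk'))
      rw [h1]
  · exact Fintype.card_subtype_lt (p := fun e : M.E => e ≠ h₂.1) (x := h₂.1) (by simp)

/-- A connected graph with an essential vertex can be presented without vertices of degree two. -/
theorem exists_reduced [T2Space Γ] [ConnectedSpace Γ] (M : GModel Γ) (hE : M.Ess.Nonempty) :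
    ∃ M' : GModel Γ, M'.Ess = M.Ess ∧ ∀ y, (M'.halves y).ncard ≠ 2 := by
  generalize hN : Fintype.card M.E = N
  induction N using Nat.strong_induction_on generalizing M with
  | _ N ih =>
  by_cases h : ∃ y, (M.halves y).ncard = 2
  · obtain ⟨y, hy⟩ := h
    obtain ⟨h₁, h₂, h12, hy⟩ := Set.ncard_eq_two.1 hy
    have hne : h₁.1 ≠ h₂.1 := by
      -- otherwise the edge would be a loop forming a whole connected component
      intro he
      have hall := M.edges_conn {h₁.1} (by
        rintro h k hk hh
        have hmem : ∀ k, M.hp k 0 = y ↔ k = h₁ ∨ k = h₂ := by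
          intro k
          have : k ∈ M.halves y ↔ k ∈ ({h₁, h₂} : Set _) := by rw [hy]
          simpa [halves] using this
        have h1 : h = h₁ ∨ h = h₂ := by
          rcases h with ⟨e, b⟩; rcases h₁ with ⟨e₁, b₁⟩; rcases h₂ with ⟨e₂, b₂⟩
          simp only [Set.mem_singleton_iff] at hh he
          subst hh; subst he
          revert h12
          cases b <;> cases b₁ <;> cases b₂ <;> simp
        have h2 := (hmem k).1 (hk ▸ (hmem h).2 h1)
        rcases h2 with h2 | h2 <;> rw [h2]
        · rfl
        · exact he.symm) (a := h₁.1) rfl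
      obtain ⟨v, hv⟩ := hE
      obtain ⟨a, b, c, -, -, -, -, h1, -⟩ := M.exists_three hv
      exact h1 ((hall b.1).trans (hall a.1).symm)
    obtain ⟨M', h1, h2⟩ := M.exists_merge hy hne
    obtain ⟨M'', h3, h4⟩ := ih _ (hN ▸ h2) M' (h1 ▸ hE) rfl
    exact ⟨M'', h3.trans h1, h4⟩
  · push Not at h
    exact ⟨M, rfl, h⟩

end Merge

/-! ### Distance to a vertex and contraction towards it -/

section Star

variable {M}

lemma desc_cont [T2Space Γ] {Z : Type} [TopologicalSpace Z] {f : Γ → Z}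
    (hf : ∀ e, Continuous fun t : I => f (M.c e t)) : Continuous f :=
  M.Q_quot.continuous_iff.2 (continuous_sigma fun e => hf e)

lemma desc_cont2 [T2Space Γ] {Z : Type} [TopologicalSpace Z] {f : Γ → ℝ → Z}
    (hf : ∀ e, Continuous fun z : I × I => f (M.c e z.1) z.2) :
    Continuous fun z : Γ × I => f z.1 z.2 :=
  M.Q2_quot.continuous_iff.2 (continuous_sigma fun e => hf e)

variable (M)

open Classical in
/-- The distance to the vertex `v` in the graph, truncated at `1`, every edge having length `1`. -/
noncomputable def dist (v : Γ) : Γ → ℝ := M.desc fun e t =>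
  min (if M.c e 0 = v then t else 1) (if M.c e 1 = v then 1 - t else 1)

lemma dist_c (v : Γ) (e : M.E) (t : ℝ) (ht : 0 ≤ t ∧ t ≤ 1) [Decidable (M.c e 0 = v)]
    [Decidable (M.c e 1 = v)] : M.dist v (M.c e t) =
      min (if M.c e 0 = v then t else 1) (if M.c e 1 = v then 1 - t else 1) := by
  classical
  have key : ∀ e (b : Bool), (min (if M.c e 0 = v then (if b then (1 : ℝ) else 0) else 1)
      (if M.c e 1 = v then 1 - (if b then (1 : ℝ) else 0) else 1)) =
      if M.hp (e, b) 0 = v then 0 else 1 := by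
    intro e b
    by_cases h1 : M.c e 0 = v <;> by_cases h2 : M.c e 1 = v <;> cases b <;> simp [hp, h1, h2]
  have h := M.desc_c (F := fun e t =>
    min (if M.c e 0 = v then t else 1) (if M.c e 1 = v then 1 - t else 1)) ?_ e t ht
  · unfold dist
    convert h
  · intro b b' e f h
    rw [key, key, h]

lemma dist_cont [T2Space Γ] (v : Γ) : Continuous (M.dist v) := by
  classical
  refine desc_cont (M := M) fun e => ?_
  have : (fun t : I => M.dist v (M.c e t)) = fun t : I =>
      min (if M.c e 0 = v then (t : ℝ) else 1) (if M.c e 1 = v then 1 - (t : ℝ) else 1) :=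
    funext fun t => M.dist_c v e t t.2
  rw [this]
  split_ifs <;> fun_prop

lemma dist_nonneg (v y : Γ) : 0 ≤ M.dist v y := by
  classical
  obtain ⟨e, t, ht, rfl⟩ := M.surj y
  rw [M.dist_c v e t ht]
  refine le_min ?_ ?_ <;> split_ifs <;> linarith [ht.1, ht.2]

/-- A point at distance less than `1/2` lies on a half-edge issuing from `v`. -/
lemma dist_cases {v y : Γ} (h : M.dist v y < 1 / 2) :
    ∃ e t, (0 ≤ t ∧ t ≤ 1) ∧ y = M.c e t ∧
      ((M.c e 0 = v ∧ t < 1 / 2 ∧ M.dist v y = t) ∨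
        (M.c e 1 = v ∧ 1 - t < 1 / 2 ∧ M.dist v y = 1 - t)) := by
  classical
  obtain ⟨e, t, ht, rfl⟩ := M.surj y
  refine ⟨e, t, ht, rfl, ?_⟩
  rw [M.dist_c v e t ht] at h ⊢
  rcases le_total (if M.c e 0 = v then t else 1) (if M.c e 1 = v then 1 - t else 1) with h' | h'
  · rw [min_eq_left h'] at h ⊢
    split_ifs at h ⊢ with h1 <;> first | exact Or.inl ⟨h1, h, rfl⟩ | linarith
  · rw [min_eq_right h'] at h ⊢
    split_ifs at h ⊢ with h1 <;> first | exact Or.inr ⟨h1, h, rfl⟩ | linarith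

lemma dist_eq_zero {v y : Γ} (h : M.dist v y = 0) : y = v := by
  obtain ⟨e, t, -, rfl, ⟨h1, -, h2⟩ | ⟨h1, -, h2⟩⟩ := M.dist_cases (v := v) (y := y) (by linarith)
  · rw [← h1, ← h2, h]
  · rw [← h1]; congr 1; linarith

lemma dist_self {v : Γ} (hv : ∃ h, M.hp h 0 = v) : M.dist v v = 0 := by
  classical
  obtain ⟨⟨e, b⟩, rfl⟩ := hv
  cases b
  · have := M.dist_c (M.c e 0) e 0 (by norm_num)
    simp only [hp]
    simp only [Bool.false_eq_true, if_false]
    rw [this, if_pos rfl]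
    split_ifs <;> norm_num
  · have := M.dist_c (M.c e 1) e 1 (by norm_num)
    simp only [hp]
    simp only [if_true, sub_zero]
    rw [this, if_pos (c := M.c e 1 = M.c e 1) rfl]
    split_ifs <;> norm_num

lemma dist_unique {v w y : Γ} (hv : M.dist v y < 1 / 2) (hw : M.dist w y < 1 / 2) : v = w := by
  classical
  obtain ⟨e, t, ht, rfl, h⟩ := M.dist_cases hv
  rw [M.dist_c w e t ht] at hw
  rcases h with h | h <;> rcases min_lt_iff.1 hw with h' | h' <;> split_ifs at h' with h2 <;>
    first | exact h.1.symm.trans h2 | linarith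

/-- The radial shrinking function: the point at distance `t` from the vertex travels the distance
`s * shr t`. -/
noncomputable def shr (t : ℝ) : ℝ := max 0 (min t (1 / 2 - t))

lemma shr_nonneg (t : ℝ) : 0 ≤ shr t := le_max_left _ _
lemma shr_le {t : ℝ} (ht : 0 ≤ t) : shr t ≤ t := max_le ht (min_le_left _ _)
lemma shr_small {t : ℝ} (ht : 0 ≤ t) (h : t ≤ 1 / 4) : shr t = t := by
  rw [shr, min_eq_left (by linarith), max_eq_right ht]
lemma shr_big {t : ℝ} (h : 1 / 2 ≤ t) : shr t = 0 := by
  rw [shr, max_eq_left]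
  exact (min_le_right _ _).trans (by linarith)

open Classical in
/-- The position on the edge `e` at time `s` of the point `t`, under the contraction towards
`v`. -/
noncomputable def kpos (v : Γ) (e : M.E) (t s : ℝ) : ℝ :=
  t - s * (if M.c e 0 = v then shr t else 0) + s * (if M.c e 1 = v then shr (1 - t) else 0)

lemma kpos_mem (v : Γ) (e : M.E) {t s : ℝ} (ht : 0 ≤ t ∧ t ≤ 1) (hs : 0 ≤ s ∧ s ≤ 1) :
    0 ≤ M.kpos v e t s ∧ M.kpos v e t s ≤ 1 := by
  classical
  unfold kpos
  have h1 : ∀ P : Prop, ∀ [Decidable P], 0 ≤ s * (if P then shr t else 0) ∧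
      s * (if P then shr t else 0) ≤ t := by
    intro P _
    have h2 := shr_le ht.1
    have h3 := shr_nonneg t
    split_ifs
    · exact ⟨mul_nonneg hs.1 h3, (mul_le_of_le_one_left h3 hs.2).trans h2⟩
    · simp [ht.1]
  have h1' : ∀ P : Prop, ∀ [Decidable P], 0 ≤ s * (if P then shr (1 - t) else 0) ∧
      s * (if P then shr (1 - t) else 0) ≤ 1 - t := by
    intro P _
    have h2 := shr_le (sub_nonneg.2 ht.2)
    have h3 := shr_nonneg (1 - t)
    split_ifs
    · exact ⟨mul_nonneg hs.1 h3, (mul_le_of_le_one_left h3 hs.2).trans h2⟩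
    · simp [ht.2]
  constructor
  · linarith [h1 (M.c e 0 = v), h1' (M.c e 1 = v)]
  · linarith [h1 (M.c e 0 = v), h1' (M.c e 1 = v)]

/-- The homotopy of the graph which at time `1` has collapsed the ball of radius `1/4` around `v` to
the point `v`. -/
noncomputable def contr (v y : Γ) (s : ℝ) : Γ :=
  M.desc (fun e t => M.c e (M.kpos v e t s)) y

lemma contr_c (v : Γ) (e : M.E) (t s : ℝ) (ht : 0 ≤ t ∧ t ≤ 1) :
    M.contr v (M.c e t) s = M.c e (M.kpos v e t s) := by
  refine M.desc_c (F := fun e t => M.c e (M.kpos v e t s)) ?_ e t ht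
  have key : ∀ e (b : Bool), M.c e (M.kpos v e (if b then 1 else 0) s) = M.hp (e, b) 0 := by
    intro e b
    have h1 : shr 1 = 0 := shr_big (by norm_num)
    cases b <;> simp [kpos, hp, shr_small (le_refl (0 : ℝ)), h1]
  intro b b' e f h
  simp only [key]
  exact h

lemma contr_cont [T2Space Γ] (v : Γ) : Continuous fun z : Γ × I => M.contr v z.1 z.2 := by
  refine desc_cont2 (M := M) fun e => ?_
  have : (fun z : I × I => M.contr v (M.c e z.1) z.2) =
      fun z : I × I => M.c e (M.kpos v e z.1 z.2) := funext fun z => M.contr_c v e z.1 z.2 z.1.2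
  rw [this]
  refine (M.cont e).comp ?_
  unfold kpos shr
  split_ifs <;> fun_prop

lemma contr_zero (v y : Γ) : M.contr v y 0 = y := by
  obtain ⟨e, t, ht, rfl⟩ := M.surj y
  rw [M.contr_c v e t 0 ht]
  simp [kpos]

lemma dist_contr {v y : Γ} {s : ℝ} (hs : 0 ≤ s ∧ s ≤ 1) (h : M.dist v y < 1 / 4) :
    M.dist v (M.contr v y s) = (1 - s) * M.dist v y := by
  classical
  obtain ⟨e, t, ht, rfl, h'⟩ := M.dist_cases (v := v) (y := y) (by linarith)
  rw [M.contr_c v e t s ht, M.dist_c v e _ (M.kpos_mem v e ht hs)]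
  have hs1 : 0 ≤ 1 - s := by linarith [hs.2]
  rcases h' with ⟨h1, h2, h3⟩ | ⟨h1, h2, h3⟩
  · rw [h3] at h ⊢
    have e1 : M.kpos v e t s = (1 - s) * t := by
      simp only [kpos, h1, if_true, shr_small ht.1 h.le, shr_big (t := 1 - t) (by linarith)]
      split_ifs <;> ring
    have h4 : (1 - s) * t ≤ t := mul_le_of_le_one_left ht.1 (by linarith [hs.1])
    rw [e1, if_pos h1, min_eq_left]
    split_ifs <;> linarith
  · rw [h3] at h ⊢
    have e1 : M.kpos v e t s = 1 - (1 - s) * (1 - t) := by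
      simp only [kpos, h1, if_true, shr_small (sub_nonneg.2 ht.2) h.le,
        shr_big (t := t) (by linarith)]
      split_ifs <;> ring
    have h4 : (1 - s) * (1 - t) ≤ 1 - t :=
      mul_le_of_le_one_left (by linarith [ht.2]) (by linarith [hs.1])
    rw [e1, if_pos h1, min_eq_right]
    · ring
    · split_ifs <;> linarith

lemma contr_one {v y : Γ} (h : M.dist v y < 1 / 4) : M.contr v y 1 = v :=
  M.dist_eq_zero (by rw [M.dist_contr (by norm_num) h]; ring)

lemma dist_contr_le {v y : Γ} {s : ℝ} (hs : 0 ≤ s ∧ s ≤ 1) (h : M.dist v y < 1 / 4) :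
    M.dist v (M.contr v y s) ≤ M.dist v y := by
  rw [M.dist_contr hs h]
  exact mul_le_of_le_one_left (M.dist_nonneg v y) (by linarith [hs.1])

end Star

/-! ### Coordinates on the complement of the essential vertices -/

section Coord

variable {M}

lemma ess_vertex {v : Γ} (hv : v ∈ M.Ess) : ∃ h, M.hp h 0 = v := by
  obtain ⟨a, b, c, ha, -⟩ := M.exists_three hv
  exact ⟨a, ha⟩

lemma ess_finite : M.Ess.Finite :=
  (Set.finite_range fun h : M.E × Bool => M.hp h 0).subset fun _ hv => ess_vertex hv

/-- Without vertices of degree two, the points which are not essential vertices have unique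
coordinates. -/
lemma coord_unique (hred : ∀ y, (M.halves y).ncard ≠ 2)
    {e f : M.E} {t r : ℝ} (ht : 0 ≤ t ∧ t ≤ 1) (hr : 0 ≤ r ∧ r ≤ 1)
    (h : M.c e t = M.c f r) (hy : M.c e t ∉ M.Ess) : e = f ∧ t = r := by
  by_contra hne
  obtain ⟨b, b', h1, h2, h3, h4⟩ := M.c_eq_ends ht hr h hne
  have hle : (M.halves (M.c e t)).ncard ≤ 1 := by
    have := hred (M.c e t)
    have h5 : ¬ 3 ≤ (M.halves (M.c e t)).ncard := hy
    omega
  have h5 := (Set.ncard_le_one (Set.toFinite _)).1 hle (e, b) h3 (f, b') (h4.trans h.symm)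
  simp only [Prod.mk.injEq] at h5
  exact hne ⟨h5.1, by rw [h1, h2, h5.2]⟩

lemma coord_c (hred : ∀ y, (M.halves y).ncard ≠ 2) {e : M.E} {t : ℝ} (ht : 0 ≤ t ∧ t ≤ 1)
    (hy : M.c e t ∉ M.Ess) :
    M.ed (M.c e t) = e ∧ M.par (M.c e t) = t := by
  have := coord_unique hred ht (M.par_mem (M.c e t)) (M.c_ed_par (M.c e t)).symm hy
  exact ⟨this.1.symm, this.2.symm⟩

/-- The non-essential part of an edge is convex. -/
lemma coord_convex {e : M.E} {t r : ℝ} (ht : 0 ≤ t ∧ t ≤ 1) (hr : 0 ≤ r ∧ r ≤ 1)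
    (h1 : M.c e t ∉ M.Ess) (h2 : M.c e r ∉ M.Ess) {s : ℝ} (hs : 0 ≤ s ∧ s ≤ 1) :
    (0 ≤ (1 - s) * t + s * r ∧ (1 - s) * t + s * r ≤ 1) ∧
      M.c e ((1 - s) * t + s * r) ∉ M.Ess := by
  have hs' : 0 ≤ 1 - s := by linarith [hs.2]
  have hb : 0 ≤ (1 - s) * t + s * r ∧ (1 - s) * t + s * r ≤ 1 := by
    have a1 := mul_nonneg hs' ht.1
    have a2 := mul_nonneg hs.1 hr.1
    have a3 := mul_le_of_le_one_right hs' ht.2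
    have a4 := mul_le_of_le_one_right hs.1 hr.2
    constructor <;> linarith
  refine ⟨hb, fun hE => ?_⟩
  -- an essential vertex would have to be an end of the edge, hence an end of the segment
  have hend : (1 - s) * t + s * r = 0 ∨ (1 - s) * t + s * r = 1 := by
    obtain ⟨h, hh⟩ := ess_vertex hE
    by_contra! hne
    have hint : 0 < (1 - s) * t + s * r ∧ (1 - s) * t + s * r < 1 :=
      ⟨lt_of_le_of_ne hb.1 hne.1.symm, lt_of_le_of_ne hb.2 hne.2⟩
    have h3 := M.hp_inj (h := (e, false)) (k := h) (r := 0) hint (by norm_num)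
      (by rw [hh]; simp [hp])
    rcases h3 with h3 | h3 <;> linarith [h3.2, hint.1, hint.2]
  have a1 := mul_nonneg hs' ht.1
  have a2 := mul_nonneg hs.1 hr.1
  have b1 := mul_nonneg hs' (sub_nonneg.2 ht.2)
  have b2 := mul_nonneg hs.1 (sub_nonneg.2 hr.2)
  by_cases hs0 : s = 0
  · rw [hs0] at hE
    exact h1 (by simpa using hE)
  rcases hend with h0 | h0
  · have h4 : s * r = 0 := by linarith
    have h5 : r = 0 := (mul_eq_zero.1 h4).resolve_left hs0
    rw [h0] at hE
    exact h2 (h5 ▸ hE)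
  · have h4 : s * (1 - r) = 0 := by linarith
    have h5 : 1 - r = 0 := (mul_eq_zero.1 h4).resolve_left hs0
    rw [h0] at hE
    have h6 : r = 1 := by linarith
    exact h2 (h6 ▸ hE)

/-- The part of the edge `e` outside of the essential vertices. -/
def piece (M : GModel Γ) (e : M.E) : Set Γ := {y | y ∉ M.Ess ∧ M.ed y = e}

lemma piece_open [T2Space Γ] (hred : ∀ y, (M.halves y).ncard ≠ 2) (e : M.E) :
    IsOpen (piece M e) := by
  have hE : IsClosed M.Ess := ess_finite.isClosed
  rw [← M.Q_quot.isOpen_preimage, isOpen_sigma_iff]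
  intro f
  by_cases hf : f = e
  · subst hf
    have : (Sigma.mk f ⁻¹' (M.Q ⁻¹' piece M f)) =
        (fun t : I => M.c f t) ⁻¹' M.Essᶜ := by
      ext t
      exact ⟨fun h => h.1, fun h => ⟨h, (coord_c hred t.2 h).1⟩⟩
    rw [this]
    exact hE.isOpen_compl.preimage ((M.cont f).comp continuous_subtype_val)
  · have : (Sigma.mk f ⁻¹' (M.Q ⁻¹' piece M e)) = ∅ := by
      ext t
      simp only [Set.mem_preimage, Set.mem_empty_iff_false, iff_false]
      rintro ⟨h1, h2⟩
      exact hf ((coord_c hred t.2 h1).1.symm.trans h2)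
    rw [this]
    exact isOpen_empty

lemma par_contOn [T2Space Γ] (hred : ∀ y, (M.halves y).ncard ≠ 2) (e : M.E) :
    ContinuousOn M.par (piece M e) := by
  rw [M.Q_quot.continuousOn_isOpen_iff (piece_open hred e)]
  have hc : Continuous fun z : (Σ _ : M.E, I) => (z.2 : ℝ) :=
    continuous_sigma fun e => continuous_subtype_val
  refine hc.continuousOn.congr ?_
  rintro ⟨f, t⟩ ⟨h1, h2⟩
  exact (coord_c hred t.2 h1).2

end Coord

end GModel

/-! ### Constructing motion planners -/

section Planner

variable {X : Type} [TopologicalSpace X]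

lemma hasMotionPlanner_of_homotopic {U : Set (X × X)} {f g : C(U, X)} (hf : ∀ p, f p = p.1.1)
    (hg : ∀ p, g p = p.1.2) (h : f.Homotopic g) : HasMotionPlanner U := by
  obtain ⟨H⟩ := h
  refine ⟨(H.toContinuousMap.comp ContinuousMap.prodSwap).curry, fun p => ⟨?_, ?_⟩⟩
  · exact (H.apply_zero p).trans (hf p)
  · exact (H.apply_one p).trans (hg p)

lemma HasMotionPlanner.mono {U W : Set (X × X)} (h : HasMotionPlanner W) (hU : U ⊆ W) :
    HasMotionPlanner U := by
  obtain ⟨s, hs⟩ := h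
  exact ⟨s.comp ⟨Set.inclusion hU, continuous_inclusion hU⟩, fun p => hs (Set.inclusion hU p)⟩

/-- In a path-connected space, a product of two sets contractible in the whole space has a motion
planner. -/
lemma hasMotionPlanner_prod (hX : ∀ x y : X, Joined x y) {S T : Set X}
    (hS : ∀ x ∈ S, ∃ z, (⟨Subtype.val, continuous_subtype_val⟩ : C(S, X)).Homotopic
      (ContinuousMap.const S z))
    (hT : ∀ x ∈ T, ∃ z, (⟨Subtype.val, continuous_subtype_val⟩ : C(T, X)).Homotopic
      (ContinuousMap.const T z)) : HasMotionPlanner (S ×ˢ T) := by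
  by_cases hne : (S ×ˢ T).Nonempty
  · obtain ⟨⟨x, y⟩, hx, hy⟩ := hne
    obtain ⟨z, hz⟩ := hS x hx
    obtain ⟨w, hw⟩ := hT y hy
    let f : C(↥(S ×ˢ T), S) := ⟨fun p => ⟨p.1.1, p.2.1⟩, by fun_prop⟩
    let g : C(↥(S ×ˢ T), T) := ⟨fun p => ⟨p.1.2, p.2.2⟩, by fun_prop⟩
    have h1 := hz.comp (ContinuousMap.Homotopic.refl f)
    have h2 := hw.comp (ContinuousMap.Homotopic.refl g)
    have h3 : (ContinuousMap.const ↥(S ×ˢ T) z).Homotopic (ContinuousMap.const _ w) := by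
      obtain ⟨γ⟩ := hX z w
      exact ⟨⟨⟨fun q => γ q.1, by fun_prop⟩, by simp, by simp⟩⟩
    exact hasMotionPlanner_of_homotopic (fun _ => rfl) (fun _ => rfl)
      ((h1.trans h3).trans h2.symm)
  · rw [Set.not_nonempty_iff_eq_empty] at hne
    rw [hne]
    exact ⟨⟨fun p => absurd p.2 (Set.notMem_empty _),
      continuous_iff_continuousAt.2 fun p => absurd p.2 (Set.notMem_empty _)⟩,
      fun p => absurd p.2 (Set.notMem_empty _)⟩

/-- Motion planners over disjoint open sets glue. -/
lemma hasMotionPlanner_iUnion {ι : Type} {U : ι → Set (X × X)} (ho : ∀ i, IsOpen (U i))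
    (hd : ∀ i j p, p ∈ U i → p ∈ U j → i = j) (h : ∀ i, HasMotionPlanner (U i)) :
    HasMotionPlanner (⋃ i, U i) := by
  choose s hs using h
  let S : ι → Set ↥(⋃ i, U i) := fun i => Subtype.val ⁻¹' U i
  let φ : ∀ i, C(S i, C(I, X)) := fun i =>
    (s i).comp ⟨fun p => ⟨p.1.1, p.2⟩, by fun_prop⟩
  have hφ : ∀ i j (x : ↥(⋃ i, U i)) (hxi : x ∈ S i) (hxj : x ∈ S j),
      φ i ⟨x, hxi⟩ = φ j ⟨x, hxj⟩ := by
    intro i j x hxi hxj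
    obtain rfl := hd i j x.1 hxi hxj
    rfl
  have hS : ∀ x : ↥(⋃ i, U i), ∃ i, S i ∈ nhds x := by
    intro x
    obtain ⟨i, hi⟩ := Set.mem_iUnion.1 x.2
    exact ⟨i, ((ho i).preimage continuous_subtype_val).mem_nhds hi⟩
  refine ⟨ContinuousMap.liftCover S φ hφ hS, fun p => ?_⟩
  obtain ⟨i, hi⟩ := Set.mem_iUnion.1 p.2
  have : ContinuousMap.liftCover S φ hφ hS p = φ i ⟨p, hi⟩ :=
    ContinuousMap.liftCover_coe (S := S) (φ := φ) (hφ := hφ) (hS := hS) (i := i) ⟨p, hi⟩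
  rw [this]
  exact hs i ⟨p.1, hi⟩

/-- A homotopy of configurations given particle by particle. -/
lemma conf_homotopic {n : ℕ} {Y : Type} [TopologicalSpace Y] (F : Fin n → I × Y → X)
    (hF : ∀ p, Continuous (F p)) (hi : ∀ z, Function.Injective fun p => F p z)
    {f g : C(Y, Conf X n)} (hf : ∀ y p, F p (0, y) = (f y).1 p)
    (hg : ∀ y p, F p (1, y) = (g y).1 p) : f.Homotopic g :=
  ⟨⟨⟨fun z => ⟨fun p => F p z, hi z⟩, (continuous_pi hF).subtype_mk _⟩,
    fun y => Subtype.ext (funext fun p => hf y p), fun y => Subtype.ext (funext fun p => hg y p)⟩⟩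

end Planner

namespace GModel

variable {Γ : Type} [TopologicalSpace Γ] (M : GModel Γ)

/-! ### The strata of the configuration space -/

section Strata

variable {n : ℕ}

/-- The particle `p` is the only one nearest to `v`, and it is at distance less than `1/4`. -/
def Near (v : Γ) (p : Fin n) (x : Conf Γ n) : Prop :=
  M.dist v (x.1 p) < 1 / 4 ∧ ∀ q, q ≠ p → M.dist v (x.1 p) < M.dist v (x.1 q)

/-- The configurations where each vertex of `A` has a nearest particle close to it, and the other
essential vertices are not occupied. -/
def Stratum (n : ℕ) (A : Set Γ) : Set (Conf Γ n) :=
  {x | (∀ v ∈ A, ∃ p, M.Near v p x) ∧ ∀ v ∈ M.Ess, v ∉ A → ∀ p, x.1 p ≠ v}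

/-- The particle `p` is attached to no vertex of `A`. -/
def Free (A : Set Γ) (p : Fin n) (x : Conf Γ n) : Prop := ∀ v ∈ A, ¬ M.Near v p x

/-- The combinatorial type of a configuration: which particle is near which vertex of `A`, on
which edges the free particles are, and how these are ordered. -/
def typ (A : Set Γ) (x : Conf Γ n) :
    (Γ → Fin n → Prop) × (Fin n → M.E → Prop) × (Fin n → Fin n → Prop) :=
  (fun v p => v ∈ A ∧ M.Near v p x,
    fun p e => M.Free A p x ∧ M.ed (x.1 p) = e,
    fun p q => (M.Free A p x ∧ M.Free A q x ∧ M.ed (x.1 p) = M.ed (x.1 q)) ∧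
      M.par (x.1 p) < M.par (x.1 q))

variable {M}

lemma near_unique {v : Γ} {p q : Fin n} {x : Conf Γ n} (hp : M.Near v p x) (hq : M.Near v q x) :
    p = q := by
  by_contra h
  exact lt_asymm (hp.2 q (Ne.symm h)) (hq.2 p h)

lemma cont_at (p : Fin n) : Continuous fun x : Conf Γ n => x.1 p :=
  (continuous_apply p).comp continuous_subtype_val

lemma near_open [T2Space Γ] (v : Γ) (p : Fin n) : IsOpen {x : Conf Γ n | M.Near v p x} := by
  have hc : ∀ q : Fin n, Continuous fun x : Conf Γ n => M.dist v (x.1 q) := fun q =>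
    (M.dist_cont v).comp (cont_at q)
  refine (isOpen_lt (hc p) continuous_const).inter ?_
  have : {x : Conf Γ n | ∀ q, q ≠ p → M.dist v (x.1 p) < M.dist v (x.1 q)} =
      ⋂ q, {x : Conf Γ n | q ≠ p → M.dist v (x.1 p) < M.dist v (x.1 q)} := by
    ext; simp
  change IsOpen {x : Conf Γ n | ∀ q, q ≠ p → M.dist v (x.1 p) < M.dist v (x.1 q)}
  rw [this]
  refine isOpen_iInter_of_finite fun q => ?_
  by_cases hq : q = p
  · simp [hq]
  · simpa [hq] using isOpen_lt (hc p) (hc q)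

lemma stratum_open [T2Space Γ] {A : Set Γ} (hA : A ⊆ M.Ess) : IsOpen (M.Stratum n A) := by
  have h1 : IsOpen {x : Conf Γ n | ∀ v ∈ A, ∃ p, M.Near v p x} := by
    have : {x : Conf Γ n | ∀ v ∈ A, ∃ p, M.Near v p x} =
        ⋂ v ∈ A, ⋃ p, {x : Conf Γ n | M.Near v p x} := by
      ext; simp
    rw [this]
    exact (ess_finite.subset hA).isOpen_biInter fun v _ => isOpen_iUnion fun p => near_open v p
  have h2 : IsOpen {x : Conf Γ n | ∀ v ∈ M.Ess, v ∉ A → ∀ p, x.1 p ≠ v} := by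
    have : {x : Conf Γ n | ∀ v ∈ M.Ess, v ∉ A → ∀ p, x.1 p ≠ v} =
        ⋂ v ∈ M.Ess \ A, ⋂ p, {x : Conf Γ n | x.1 p ≠ v} := by
      ext; simp
    rw [this]
    exact (ess_finite.subset Set.sdiff_subset).isOpen_biInter fun v _ =>
      isOpen_iInter_of_finite fun p => isOpen_ne_fun (cont_at p) continuous_const
  exact h1.inter h2

lemma free_not_ess {A : Set Γ} {x : Conf Γ n} (hx : x ∈ M.Stratum n A) {p : Fin n}
    (hp : M.Free A p x) : x.1 p ∉ M.Ess := by
  intro hE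
  by_cases hA : x.1 p ∈ A
  · obtain ⟨q, hq⟩ := hx.1 _ hA
    have hne : p ≠ q := fun h => hp _ hA (h ▸ hq)
    have h1 := hq.2 p hne
    rw [M.dist_self (ess_vertex hE)] at h1
    exact absurd h1 (not_lt.2 (M.dist_nonneg _ _))
  · exact hx.2 _ hE hA p rfl

open Filter in
lemma typ_eventually [T2Space Γ] (hred : ∀ y, (M.halves y).ncard ≠ 2) {A : Set Γ} (hA : A ⊆ M.Ess)
    {x : Conf Γ n} (hx : x ∈ M.Stratum n A) :
    ∀ᶠ y in nhds x, M.typ A y = M.typ A x := by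
  have e1 : ∀ᶠ y in nhds x, ∀ v ∈ A, ∀ p, (M.Near v p y ↔ M.Near v p x) := by
    refine (eventually_all_finite (ess_finite.subset hA)).2 fun v hv => eventually_all.2 fun p => ?_
    obtain ⟨q, hq⟩ := hx.1 v hv
    filter_upwards [(near_open v q).mem_nhds hq] with y hy
    constructor
    · intro h
      rwa [near_unique h hy]
    · intro h
      rwa [near_unique h hq]
  have e2 : ∀ᶠ y in nhds x, ∀ p, M.Free A p x → y.1 p ∈ piece M (M.ed (x.1 p)) := by
    refine eventually_all.2 fun p => ?_
    by_cases hp : M.Free A p x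
    · filter_upwards [((piece_open hred (M.ed (x.1 p))).preimage (cont_at p)).mem_nhds
        ⟨free_not_ess hx hp, rfl⟩] with y hy _
      exact hy
    · exact Eventually.of_forall fun y h => absurd h hp
  have hpar : ∀ p, M.Free A p x → ContinuousAt (fun y : Conf Γ n => M.par (y.1 p)) x := by
    intro p hp
    have h1 := (par_contOn hred (M.ed (x.1 p))).continuousAt
      ((piece_open hred _).mem_nhds ⟨free_not_ess hx hp, rfl⟩)
    exact ContinuousAt.comp (f := fun y : Conf Γ n => y.1 p) h1 (cont_at p).continuousAt
  have e3 : ∀ᶠ y in nhds x, ∀ p q, M.Free A p x → M.Free A q x →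
      M.par (x.1 p) < M.par (x.1 q) → M.par (y.1 p) < M.par (y.1 q) := by
    refine eventually_all.2 fun p => eventually_all.2 fun q => ?_
    by_cases h : M.Free A p x ∧ M.Free A q x ∧ M.par (x.1 p) < M.par (x.1 q)
    · filter_upwards [(hpar p h.1).eventually_lt (hpar q h.2.1) h.2.2] with y hy _ _ _
      exact hy
    · exact Eventually.of_forall fun y h1 h2 h3 => absurd ⟨h1, h2, h3⟩ h
  filter_upwards [e1, e2, e3] with y h1 h2 h3
  have hf : ∀ p, M.Free A p y ↔ M.Free A p x := fun p =>
    forall₂_congr fun v hv => not_congr (h1 v hv p)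
  have hed : ∀ p, M.Free A p x → M.ed (y.1 p) = M.ed (x.1 p) := fun p hp => (h2 p hp).2
  refine Prod.ext ?_ (Prod.ext ?_ ?_)
  · funext v p
    exact propext (and_congr_right fun hv => h1 v hv p)
  · funext p e
    refine propext ((and_congr_left' (hf p)).trans (and_congr_right fun hp => ?_))
    rw [hed p hp]
  · funext p q
    refine propext ?_
    simp only [typ]
    rw [hf p, hf q]
    constructor
    · rintro ⟨⟨hp, hq, he⟩, hlt⟩
      rw [hed p hp, hed q hq] at he
      refine ⟨⟨hp, hq, he⟩, ?_⟩
      by_contra hle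
      rcases (not_lt.1 hle).lt_or_eq with h4 | h4
      · exact lt_asymm hlt (h3 q p hq hp h4)
      · have : x.1 p = x.1 q := by
          rw [← M.c_ed_par (x.1 p), ← M.c_ed_par (x.1 q), he, h4]
        rw [x.2 this] at hlt
        exact lt_irrefl _ hlt
    · rintro ⟨⟨hp, hq, he⟩, hlt⟩
      refine ⟨⟨hp, hq, ?_⟩, h3 p q hp hq hlt⟩
      rw [hed p hp, hed q hq, he]

/-- The configurations of a given combinatorial type in a given stratum. -/
def Cell (M : GModel Γ) (n : ℕ) (A : Set Γ)
    (τ : (Γ → Fin n → Prop) × (Fin n → M.E → Prop) × (Fin n → Fin n → Prop)) :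
    Set (Conf Γ n) := {x | x ∈ M.Stratum n A ∧ M.typ A x = τ}

lemma cell_open [T2Space Γ] (hred : ∀ y, (M.halves y).ncard ≠ 2) {A : Set Γ} (hA : A ⊆ M.Ess) τ :
    IsOpen (Cell M n A τ) := by
  refine isOpen_iff_mem_nhds.2 fun x hx => ?_
  filter_upwards [(stratum_open hA).mem_nhds hx.1, typ_eventually hred hA hx.1] with y h1 h2
  exact ⟨h1, h2.trans hx.2⟩

/-- Each cell is contractible in the configuration space: the particles near a vertex move into
it, and then the free particles move along their edges. -/
lemma cell_contract [T2Space Γ] (hred : ∀ y, (M.halves y).ncard ≠ 2) {A : Set Γ}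
    (hA : A ⊆ M.Ess) {τ}
    {x : Conf Γ n} (hx : x ∈ Cell M n A τ) : ∃ z : Conf Γ n,
    (⟨Subtype.val, continuous_subtype_val⟩ : C(Cell M n A τ, Conf Γ n)).Homotopic
      (ContinuousMap.const _ z) := by
  classical
  have hty : ∀ y : Cell M n A τ, M.typ A y.1 = M.typ A x := fun y => y.2.2.trans hx.2.symm
  have hnear : ∀ (y : Cell M n A τ) v p, v ∈ A → M.Near v p x → M.Near v p y.1 := by
    intro y v p hv h
    have h1 := congrFun (congrFun (congrArg Prod.fst (hty y)) v) p
    exact ((iff_of_eq h1).2 ⟨hv, h⟩).2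
  have hfree : ∀ (y : Cell M n A τ) p, M.Free A p x →
      M.Free A p y.1 ∧ M.ed (y.1.1 p) = M.ed (x.1 p) := by
    intro y p h
    have h1 := congrFun (congrFun (congrArg (fun z => z.2.1) (hty y)) p) (M.ed (x.1 p))
    exact (iff_of_eq h1).2 ⟨h, rfl⟩
  have hord : ∀ (y : Cell M n A τ) p q, M.Free A p x → M.Free A q x →
      M.ed (x.1 p) = M.ed (x.1 q) → M.par (x.1 p) < M.par (x.1 q) →
      M.par (y.1.1 p) < M.par (y.1.1 q) := by
    intro y p q h h' he hlt
    have h1 := congrFun (congrFun (congrArg (fun z => z.2.2) (hty y)) p) q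
    exact ((iff_of_eq h1).2 ⟨⟨h, h', he⟩, hlt⟩).2
  have hdich : ∀ p, (∃ v ∈ A, M.Near v p x) ∨ M.Free A p x := by
    intro p
    by_cases h : ∃ v ∈ A, M.Near v p x
    · exact Or.inl h
    · right
      intro v hv hn
      exact h ⟨v, hv, hn⟩
  -- the vertex to which a particle is attached
  let κ : Fin n → Γ := fun p => if h : ∃ v ∈ A, M.Near v p x then h.choose else x.1 p
  have hκ : ∀ p, (∃ v ∈ A, M.Near v p x) → κ p ∈ A ∧ M.Near (κ p) p x := by
    intro p h
    simp only [κ, dif_pos h]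
    exact h.choose_spec
  have hκne : ∀ p q, p ≠ q → (∃ v ∈ A, M.Near v p x) → (∃ v ∈ A, M.Near v q x) → κ p ≠ κ q := by
    intro p q hne h1 h2 he
    exact hne (near_unique (hκ p h1).2 (he ▸ (hκ q h2).2))
  let F : Fin n → I × Cell M n A τ → Γ := fun p z =>
    if ∃ v ∈ A, M.Near v p x then M.contr (κ p) (z.2.1.1 p) z.1 else z.2.1.1 p
  let F' : Fin n → I × Cell M n A τ → Γ := fun p z =>
    if ∃ v ∈ A, M.Near v p x then κ p else
      M.c (M.ed (x.1 p)) ((1 - z.1) * M.par (z.2.1.1 p) + z.1 * M.par (x.1 p))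
  have hcv : ∀ (y : Cell M n A τ) p, M.Free A p x → ∀ s : I,
      (0 ≤ (1 - s : ℝ) * M.par (y.1.1 p) + s * M.par (x.1 p) ∧
        (1 - s : ℝ) * M.par (y.1.1 p) + s * M.par (x.1 p) ≤ 1) ∧
      M.c (M.ed (x.1 p)) ((1 - s : ℝ) * M.par (y.1.1 p) + s * M.par (x.1 p)) ∉ M.Ess := by
    intro y p hp s
    refine coord_convex (M.par_mem _) (M.par_mem _) ?_ ?_ s.2
    · rw [← (hfree y p hp).2, M.c_ed_par]
      exact free_not_ess y.2.1 (hfree y p hp).1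
    · rw [M.c_ed_par]
      exact free_not_ess hx.1 hp
  have hnot : ∀ {p}, M.Free A p x → ¬ ∃ v ∈ A, M.Near v p x := by
    rintro p hp ⟨v, hv, h⟩
    exact hp v hv h
  have hFc : ∀ p, Continuous (F p) := by
    intro p
    have hy : Continuous fun z : I × Cell M n A τ => z.2.1.1 p :=
      (cont_at p).comp (continuous_subtype_val.comp continuous_snd)
    rcases hdich p with h | h
    · simp only [F, if_pos h]
      exact (M.contr_cont (κ p)).comp (hy.prodMk continuous_fst)
    · simp only [F, if_neg (hnot h)]
      exact hy
  have hFi : ∀ z, Function.Injective fun p => F p z := by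
    rintro ⟨s, y⟩ p q he
    by_contra hne
    -- an attached particle stays closer to its vertex than the free ones
    have key : ∀ p q, p ≠ q → (∃ v ∈ A, M.Near v p x) → M.Free A q x →
        M.contr (κ p) (y.1.1 p) s ≠ y.1.1 q := by
      intro p q hne hp hq h
      have h1 := hnear y _ p (hκ p hp).1 (hκ p hp).2
      have h2 := M.dist_contr_le s.2 h1.1
      rw [h] at h2
      exact absurd (h1.2 q (Ne.symm hne)) (not_lt.2 h2)
    rcases hdich p with hp | hp <;> rcases hdich q with hq | hq
    · simp only [F, if_pos hp, if_pos hq] at he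
      have h1 := (hnear y _ p (hκ p hp).1 (hκ p hp).2).1
      have h2 := (hnear y _ q (hκ q hq).1 (hκ q hq).2).1
      have h3 := M.dist_contr_le s.2 h1
      have h4 := M.dist_contr_le s.2 h2
      rw [← he] at h4
      exact hκne p q hne hp hq
          (M.dist_unique (h3.trans_lt (by linarith)) (h4.trans_lt (by linarith)))
    · simp only [F, if_pos hp, if_neg (hnot hq)] at he
      exact key p q hne hp hq he
    · simp only [F, if_neg (hnot hp), if_pos hq] at he
      exact key q p (Ne.symm hne) hq hp he.symm
    · simp only [F, if_neg (hnot hp), if_neg (hnot hq)] at he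
      exact hne (y.1.2 he)
  have hFc' : ∀ p, Continuous (F' p) := by
    intro p
    have hy : Continuous fun z : I × Cell M n A τ => z.2.1.1 p :=
      (cont_at p).comp (continuous_subtype_val.comp continuous_snd)
    rcases hdich p with h | h
    · simp only [F', if_pos h]
      exact continuous_const
    · simp only [F', if_neg (hnot h)]
      have h2 : Continuous fun z : I × Cell M n A τ => M.par (z.2.1.1 p) :=
        (par_contOn hred (M.ed (x.1 p))).comp_continuous hy fun z =>
          ⟨free_not_ess z.2.2.1 (hfree z.2 p h).1, (hfree z.2 p h).2⟩
      exact (M.cont _).comp (by fun_prop)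
  have hFi' : ∀ z, Function.Injective fun p => F' p z := by
    rintro ⟨s, y⟩ p q he
    by_contra hne
    have hs0 : (0 : ℝ) ≤ s := s.2.1
    have hs1 : (0 : ℝ) ≤ 1 - s := by linarith [s.2.2]
    have key : ∀ p q, M.Free A p x → M.Free A q x → M.ed (x.1 p) = M.ed (x.1 q) →
        M.par (x.1 p) < M.par (x.1 q) →
        (1 - s : ℝ) * M.par (y.1.1 p) + s * M.par (x.1 p) <
          (1 - s : ℝ) * M.par (y.1.1 q) + s * M.par (x.1 q) := by
      intro p q hp hq he hlt
      have h1 := hord y p q hp hq he hlt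
      rcases hs0.eq_or_lt with h | h
      · rw [← h]; linarith
      · have := mul_lt_mul_of_pos_left hlt h
        have := mul_le_mul_of_nonneg_left h1.le hs1
        linarith
    rcases hdich p with hp | hp <;> rcases hdich q with hq | hq
    · simp only [F', if_pos hp, if_pos hq] at he
      exact hκne p q hne hp hq he
    · simp only [F', if_pos hp, if_neg (hnot hq)] at he
      exact (hcv y q hq s).2 (he ▸ hA (hκ p hp).1)
    · simp only [F', if_neg (hnot hp), if_pos hq] at he
      exact (hcv y p hp s).2 (he ▸ hA (hκ q hq).1)
    · simp only [F', if_neg (hnot hp), if_neg (hnot hq)] at he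
      obtain ⟨h1, h2⟩ := coord_unique hred (hcv y p hp s).1 (hcv y q hq s).1 he (hcv y p hp s).2
      rcases lt_trichotomy (M.par (x.1 p)) (M.par (x.1 q)) with h | h | h
      · exact absurd h2 (key p q hp hq h1 h).ne
      · refine hne (x.2 ?_)
        rw [← M.c_ed_par (x.1 p), ← M.c_ed_par (x.1 q), h1, h]
      · exact absurd h2 (key q p hq hp h1.symm h).ne'
  let mid : C(Cell M n A τ, Conf Γ n) := ⟨fun y => ⟨fun p => F p (1, y), hFi (1, y)⟩,
    (continuous_pi fun p => (hFc p).comp (by fun_prop)).subtype_mk _⟩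
  refine ⟨⟨fun p => F' p (1, ⟨x, hx⟩), hFi' _⟩, ContinuousMap.Homotopic.trans (g := mid)
    (conf_homotopic F hFc hFi ?_ ?_) (conf_homotopic F' hFc' hFi' ?_ ?_)⟩
  · intro y p
    rcases hdich p with h | h
    · simp only [F, if_pos h]
      exact M.contr_zero _ _
    · simp only [F, if_neg (hnot h)]
      rfl
  · intro y p
    rfl
  · intro y p
    change F' p (0, y) = F p (1, y)
    rcases hdich p with h | h
    · simp only [F, F', if_pos h]
      exact (M.contr_one (hnear y _ p (hκ p h).1 (hκ p h).2).1).symm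
    · simp only [F, F', if_neg (hnot h)]
      rw [← (hfree y p h).2]
      simpa using M.c_ed_par (y.1.1 p)
  · intro y p
    change F' p (1, y) = F' p (1, ⟨x, hx⟩)
    rcases hdich p with h | h
    · simp only [F', if_pos h]
    · simp only [F', if_neg (hnot h)]
      simp

end Strata

/-! ### The upper bound for reduced presentations -/

section Bound

variable {n : ℕ}

/-- The distance from `v` to the nearest particle. -/
noncomputable def near0 (hn : 1 ≤ n) (v : Γ) (x : Conf Γ n) : ℝ :=
  Finset.univ.inf' ⟨⟨0, hn⟩, Finset.mem_univ _⟩ fun p => M.dist v (x.1 p)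

variable {M}

lemma near0_cont [T2Space Γ] (hn : 1 ≤ n) (v : Γ) : Continuous fun x : Conf Γ n => M.near0 hn v x :=
  Continuous.finset_inf'_apply _ fun p _ => (M.dist_cont v).comp (cont_at p)

lemma near0_nonneg (hn : 1 ≤ n) (v : Γ) (x : Conf Γ n) : 0 ≤ M.near0 hn v x :=
  Finset.le_inf' _ _ fun _ _ => M.dist_nonneg v _

lemma near0_eq_zero (hn : 1 ≤ n) {v : Γ} (hv : v ∈ M.Ess) (x : Conf Γ n) :
    M.near0 hn v x = 0 ↔ ∃ p, x.1 p = v := by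
  constructor
  · intro h
    obtain ⟨p, -, hp⟩ := Finset.exists_mem_eq_inf' (s := Finset.univ)
      ⟨(⟨0, hn⟩ : Fin n), Finset.mem_univ _⟩ (fun p => M.dist v (x.1 p))
    exact ⟨p, M.dist_eq_zero (hp.symm.trans h)⟩
  · rintro ⟨p, rfl⟩
    refine le_antisymm ?_ (near0_nonneg hn _ x)
    exact (Finset.inf'_le _ (Finset.mem_univ p)).trans (M.dist_self (ess_vertex hv)).le

/-- Every configuration lies in the stratum of the set of essential vertices which it occupies. -/
lemma mem_stratum (hn : 1 ≤ n) (x : Conf Γ n) (A : Set Γ)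
    (hA : ∀ v, v ∈ A ↔ v ∈ M.Ess ∧ M.near0 hn v x = 0) : x ∈ M.Stratum n A := by
  constructor
  · intro v hv
    obtain ⟨hE, h0⟩ := (hA v).1 hv
    obtain ⟨p, rfl⟩ := (near0_eq_zero hn hE x).1 h0
    have h1 : M.dist (x.1 p) (x.1 p) = 0 := M.dist_self (ess_vertex hE)
    refine ⟨p, by rw [h1]; norm_num, fun q hq => ?_⟩
    rw [h1]
    refine lt_of_le_of_ne (M.dist_nonneg _ _) fun h => hq ?_
    exact x.2 (M.dist_eq_zero h.symm)
  · intro v hE hv p hp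
    exact hv ((hA v).2 ⟨hE, (near0_eq_zero hn hE x).2 ⟨p, hp⟩⟩)

/-- The list `D` consists of the distances to the essential vertices of the nearest particles, in
both configurations; it has `2 m` entries.  The open set `W A`, where the entries indexed by `A` are
smaller than all the others, contains the pairs for which `A` is the set of vanishing entries, and
for a fixed cardinality of `A` these sets are disjoint. -/
theorem tc_le_of_reduced [T2Space Γ] [ConnectedSpace Γ] (hE : M.Ess.Nonempty)
    (hred : ∀ y, (M.halves y).ncard ≠ 2) (hn : 1 ≤ n) :
    topologicalComplexity (Conf Γ n) ≤ ((2 * M.Ess.ncard + 1 : ℕ) : ℕ∞) := by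
  classical
  have : Fintype M.Ess := (ess_finite (M := M)).fintype
  let D : M.Ess ⊕ M.Ess → Conf Γ n × Conf Γ n → ℝ := fun i z =>
    Sum.elim (fun v => M.near0 hn v.1 z.1) (fun v => M.near0 hn v.1 z.2) i
  have hDc : ∀ i, Continuous (D i) := by
    rintro (v | v)
    · exact (near0_cont hn v.1).comp continuous_fst
    · exact (near0_cont hn v.1).comp continuous_snd
  have hD0 : ∀ i z, 0 ≤ D i z := by
    rintro (v | v) z
    · exact near0_nonneg hn _ _
    · exact near0_nonneg hn _ _
  let T := (Γ → Fin n → Prop) × (Fin n → M.E → Prop) × (Fin n → Fin n → Prop)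
  let A1 : Finset (M.Ess ⊕ M.Ess) → Set Γ := fun A => {v | ∃ h : v ∈ M.Ess, Sum.inl ⟨v, h⟩ ∈ A}
  let A2 : Finset (M.Ess ⊕ M.Ess) → Set Γ := fun A => {v | ∃ h : v ∈ M.Ess, Sum.inr ⟨v, h⟩ ∈ A}
  have hA1 : ∀ A, A1 A ⊆ M.Ess := fun A v hv => hv.1
  have hA2 : ∀ A, A2 A ⊆ M.Ess := fun A v hv => hv.1
  let W : Finset (M.Ess ⊕ M.Ess) → Set (Conf Γ n × Conf Γ n) := fun A =>
    {z | ∀ i j, i ∈ A → j ∉ A → D i z < D j z}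
  have hW : ∀ A, IsOpen (W A) := by
    intro A
    have : W A = ⋂ i, ⋂ j, {z | i ∈ A → j ∉ A → D i z < D j z} := by
      ext; simp [W]
    rw [this]
    refine isOpen_iInter_of_finite fun i => isOpen_iInter_of_finite fun j => ?_
    by_cases hi : i ∈ A <;> by_cases hj : j ∈ A <;> simp [hi, hj]
    exact isOpen_lt (hDc i) (hDc j)
  let P : (Finset (M.Ess ⊕ M.Ess) × T × T) → Set (Conf Γ n × Conf Γ n) := fun a =>
    W a.1 ∩ (Cell M n (A1 a.1) a.2.1 ×ˢ Cell M n (A2 a.1) a.2.2)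
  have hPo : ∀ a, IsOpen (P a) := fun a => (hW a.1).inter
    ((cell_open hred (hA1 a.1) a.2.1).prod (cell_open hred (hA2 a.1) a.2.2))
  have hPm : ∀ a, HasMotionPlanner (P a) := by
    intro a
    refine (hasMotionPlanner_prod (M.joined_all hE) ?_ ?_).mono Set.inter_subset_right
    · intro x hx
      exact cell_contract hred (hA1 a.1) hx
    · intro x hx
      exact cell_contract hred (hA2 a.1) hx
  -- index sets of the same size cannot both consist of the smallest values, unless they are equal
  have hPd : ∀ a b, a.1.card = b.1.card → ∀ z, z ∈ P a → z ∈ P b → a = b := by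
    rintro ⟨A, s, t⟩ ⟨B, s', t'⟩ hc z ⟨hz, hz1, hz2⟩ ⟨hz', hz1', hz2'⟩
    have hAB : A = B := by
      by_contra hne
      have h1 : ¬ A ⊆ B := fun h => hne (Finset.eq_of_subset_of_card_le h hc.ge)
      have h2 : ¬ B ⊆ A := fun h => hne (Finset.eq_of_subset_of_card_le h hc.le).symm
      obtain ⟨i, hi, hi'⟩ := Finset.not_subset.1 h1
      obtain ⟨j, hj, hj'⟩ := Finset.not_subset.1 h2
      exact lt_asymm (hz i j hi hj') (hz' j i hj hi')
    subst hAB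
    obtain rfl : s = s' := hz1.2.symm.trans hz1'.2
    obtain rfl : t = t' := hz2.2.symm.trans hz2'.2
    rfl
  refine sInf_le ⟨2 * M.Ess.ncard + 1, rfl, fun k => ⋃ a : {a : Finset (M.Ess ⊕ M.Ess) × T × T //
    a.1.card = k}, P a.1, fun k => isOpen_iUnion fun a => hPo a.1, ?_, fun k => ?_⟩
  · refine Set.eq_univ_of_forall fun z => ?_
    let A : Finset (M.Ess ⊕ M.Ess) := Finset.univ.filter fun i => D i z = 0
    have hcard : A.card < 2 * M.Ess.ncard + 1 := by
      have h1 := Finset.card_le_univ A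
      rw [Fintype.card_sum, ← Nat.card_eq_fintype_card, Nat.card_coe_set_eq] at h1
      omega
    refine Set.mem_iUnion.2 ⟨⟨A.card, hcard⟩, Set.mem_iUnion.2
      ⟨⟨(A, M.typ (A1 A) z.1, M.typ (A2 A) z.2), rfl⟩, ?_, ⟨?_, rfl⟩, ⟨?_, rfl⟩⟩⟩
    · intro i j hi hj
      have h1 : D i z = 0 := by simpa [A] using hi
      have h2 : D j z ≠ 0 := by simpa [A] using hj
      rw [h1]
      exact lt_of_le_of_ne (hD0 j z) h2.symm
    · refine mem_stratum hn z.1 _ fun v => ?_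
      constructor
      · rintro ⟨h, h'⟩
        exact ⟨h, by simpa [A, D] using h'⟩
      · rintro ⟨h, h'⟩
        exact ⟨h, by simpa [A, D] using h'⟩
    · refine mem_stratum hn z.2 _ fun v => ?_
      constructor
      · rintro ⟨h, h'⟩
        exact ⟨h, by simpa [A, D] using h'⟩
      · rintro ⟨h, h'⟩
        exact ⟨h, by simpa [A, D] using h'⟩
  · exact hasMotionPlanner_iUnion (fun a => hPo a.1)
      (fun a b z ha hb => Subtype.ext (hPd a.1 b.1 (a.2.trans b.2.symm) z ha hb)) fun a => hPm a.1

/-- The bound for all presentations. -/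
theorem tc_le [T2Space Γ] [ConnectedSpace Γ] (M : GModel Γ) (hE : M.Ess.Nonempty) (hn : 1 ≤ n) :
    topologicalComplexity (Conf Γ n) ≤ ((2 * M.Ess.ncard + 1 : ℕ) : ℕ∞) := by
  obtain ⟨M', hM', hred⟩ := exists_reduced M hE
  rw [← hM'] at hE ⊢
  exact tc_le_of_reduced hE hred hn

end Bound

end GModel

/-! ### The realization of a finite graph -/

namespace FinGraph

variable (G : FinGraph)

lemma edgePt_cont (e : G.E) : Continuous (G.edgePt e) :=
  continuous_quot_mk.comp (continuous_inl.comp (Continuous.prodMk_right e))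

lemma edgePt_zero (e : G.E) : G.edgePt e 0 = G.vtx (G.s e) := Quot.sound (GlueRel.src e)

lemma edgePt_one (e : G.E) : G.edgePt e 1 = G.vtx (G.t e) := Quot.sound (GlueRel.tgt e)

lemma cont_of {Z : Type} [TopologicalSpace Z] {f : G.Space → Z}
    (h : ∀ e, Continuous fun t => f (G.edgePt e t)) : Continuous f := by
  have : DiscreteTopology G.V := ⟨rfl⟩
  have : DiscreteTopology G.E := ⟨rfl⟩
  refine continuous_coinduced_dom.2 (continuous_sum_dom.2 ⟨?_, continuous_of_discreteTopology⟩)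
  exact continuous_prod_of_discrete_left.2 h

open Classical in
/-- The barycentric coordinate of a vertex. -/
noncomputable def bary (v : G.V) : G.Space → ℝ := Quot.lift
  (Sum.elim (fun z => (if G.s z.1 = v then 1 - (z.2 : ℝ) else 0) +
    (if G.t z.1 = v then (z.2 : ℝ) else 0)) fun w => if w = v then 1 else 0)
  (by rintro _ _ (e | e) <;> simp)

open Classical in
/-- Two functions supported on the edge `e`, which together separate its interior points. -/
noncomputable def bump (e : G.E) : G.Space → ℝ × ℝ := Quot.lift
  (Sum.elim (fun z => if z.1 = e then ((z.2 : ℝ) * (1 - z.2), (z.2 : ℝ) * ((z.2 : ℝ) * (1 - z.2)))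
    else 0) fun _ => 0)
  (by rintro _ _ (e | e) <;> simp)

lemma bary_cont (v : G.V) : Continuous (G.bary v) := by
  classical
  refine G.cont_of fun e => ?_
  change Continuous fun t : I => (if G.s e = v then 1 - (t : ℝ) else 0) +
    (if G.t e = v then (t : ℝ) else 0)
  split_ifs <;> fun_prop

lemma bump_cont (e : G.E) : Continuous (G.bump e) := by
  classical
  refine G.cont_of fun f => ?_
  change Continuous fun t : I => if f = e then
    ((t : ℝ) * (1 - t), (t : ℝ) * ((t : ℝ) * (1 - t))) else 0
  split_ifs <;> fun_prop

lemma vtx_inj : Function.Injective G.vtx := by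
  classical
  intro v w h
  have h1 : G.bary w (G.vtx v) = G.bary w (G.vtx w) := by rw [h]
  by_contra hne
  change (if v = w then (1 : ℝ) else 0) = if w = w then 1 else 0 at h1
  simp [hne] at h1

lemma bump_edgePt (e : G.E) (t : I) :
    G.bump e (G.edgePt e t) = ((t : ℝ) * (1 - t), (t : ℝ) * ((t : ℝ) * (1 - t))) := by
  classical
  exact if_pos rfl

lemma bump_ne {e f : G.E} (h : f ≠ e) (t : I) : G.bump e (G.edgePt f t) = 0 := by
  classical
  exact if_neg h

lemma bump_vtx (e : G.E) (v : G.V) : G.bump e (G.vtx v) = 0 := rfl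

lemma cases_pt (y : G.Space) :
    (∃ v, y = G.vtx v) ∨ ∃ e, ∃ t : I, y = G.edgePt e t ∧ (0 : ℝ) < t * (1 - t) := by
  obtain ⟨z, rfl⟩ := Quot.exists_rep y
  rcases z with ⟨e, t⟩ | v
  · by_cases h0 : t = 0
    · exact Or.inl ⟨_, by rw [h0]; exact G.edgePt_zero e⟩
    by_cases h1 : t = 1
    · exact Or.inl ⟨_, by rw [h1]; exact G.edgePt_one e⟩
    refine Or.inr ⟨e, t, rfl, ?_⟩
    have h0' : (t : ℝ) ≠ 0 := fun h => h0 (Subtype.ext h)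
    have h1' : (t : ℝ) ≠ 1 := fun h => h1 (Subtype.ext h)
    exact mul_pos (lt_of_le_of_ne t.2.1 h0'.symm) (sub_pos.2 (lt_of_le_of_ne t.2.2 h1'))
  · exact Or.inl ⟨v, rfl⟩

/-- Interior points of edges are not identified with anything. -/
lemma eq_of_bump {e f : G.E} {t r : I} (ht : (0 : ℝ) < t * (1 - t))
    (h : G.bump e (G.edgePt e t) = G.bump e (G.edgePt f r)) : e = f ∧ t = r := by
  have hef : f = e := by
    by_contra hne
    rw [G.bump_ne hne, bump_edgePt] at h
    exact ht.ne' (congrArg Prod.fst h)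
  subst hef
  rw [bump_edgePt, bump_edgePt] at h
  have h1 : (t : ℝ) * (1 - t) = r * (1 - r) := congrArg Prod.fst h
  have h2 : (t : ℝ) * (t * (1 - t)) = r * (r * (1 - r)) := congrArg Prod.snd h
  rw [← h1] at h2
  exact ⟨rfl, Subtype.ext (mul_right_cancel₀ ht.ne' h2)⟩

instance : T2Space G.Space := by
  let Φ : G.Space → (G.V → ℝ) × (G.E → ℝ × ℝ) := fun y => (fun v => G.bary v y, fun e => G.bump e y)
  have hc : Continuous Φ :=
    (continuous_pi fun v => G.bary_cont v).prodMk (continuous_pi fun e => G.bump_cont e)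
  refine T2Space.of_injective_continuous (f := Φ) ?_ hc
  intro y z h
  have h1 : ∀ v, G.bary v y = G.bary v z := fun v => congrFun (congrArg Prod.fst h) v
  have h2 : ∀ e, G.bump e y = G.bump e z := fun e => congrFun (congrArg Prod.snd h) e
  rcases G.cases_pt y with ⟨v, rfl⟩ | ⟨e, t, rfl, ht⟩ <;>
    rcases G.cases_pt z with ⟨w, rfl⟩ | ⟨f, r, rfl, hr⟩
  · classical
    have h3 := h1 w
    by_contra hne
    have hne' : v ≠ w := fun h => hne (congrArg _ h)
    change (if v = w then (1 : ℝ) else 0) = if w = w then 1 else 0 at h3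
    simp [hne'] at h3
  · have h3 := h2 f
    rw [bump_vtx, bump_edgePt] at h3
    exact absurd (congrArg Prod.fst h3) hr.ne
  · have h3 := h2 e
    rw [bump_vtx, bump_edgePt] at h3
    exact absurd (congrArg Prod.fst h3) ht.ne'
  · obtain ⟨rfl, rfl⟩ := G.eq_of_bump ht (h2 e)
    rfl

/-- In a connected graph with an essential vertex, no vertex is isolated. -/
lemma exists_incident [ConnectedSpace G.Space] (hess : ∃ v : G.V, 3 ≤ G.degree v) (v : G.V) :
    ∃ e, G.s e = v ∨ G.t e = v := by
  classical
  by_contra! hv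
  obtain ⟨u, hu⟩ := hess
  have he : ∃ e : G.E, True := by
    by_contra! hE
    have : IsEmpty G.E := ⟨fun e => hE e⟩
    simp [degree] at hu
  obtain ⟨e, -⟩ := he
  let φ : G.Space → Bool := Quot.lift (Sum.elim (fun _ => false) fun w => decide (w = v))
    (by rintro _ _ (e | e) <;> simp [hv e])
  have hφ : Continuous φ := G.cont_of fun e => continuous_const
  have h1 := PreconnectedSpace.constant inferInstance hφ (x := G.edgePt e 0) (y := G.vtx v)
  change false = decide (v = v) at h1
  simp at h1

/-- The presentation of the realization by its edges. -/
noncomputable def model [ConnectedSpace G.Space] (hess : ∃ v : G.V, 3 ≤ G.degree v) :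
    GModel G.Space where
  E := G.E
  fin := G.fintypeE
  c e t := G.edgePt e (Set.projIcc 0 1 zero_le_one t)
  cont e := (G.edgePt_cont e).comp continuous_projIcc
  surj y := by
    rcases G.cases_pt y with ⟨v, rfl⟩ | ⟨e, t, rfl, -⟩
    · obtain ⟨e, rfl | rfl⟩ := G.exists_incident hess v
      · refine ⟨e, 0, by norm_num, ?_⟩
        rw [Set.projIcc_left]
        exact G.edgePt_zero e
      · refine ⟨e, 1, by norm_num, ?_⟩
        rw [Set.projIcc_right]
        exact G.edgePt_one e
    · exact ⟨e, t, t.2, by rw [Set.projIcc_val]⟩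
  inj e f t r ht hr h := by
    rw [Set.projIcc_of_mem _ ht, Set.projIcc_of_mem _ hr] at h
    by_cases ht' : t = 0 ∨ t = 1
    · by_cases hr' : r = 0 ∨ r = 1
      · exact Or.inr ⟨ht', hr'⟩
      · left
        push Not at hr'
        have hpos : 0 < r * (1 - r) := mul_pos (lt_of_le_of_ne hr.1 hr'.1.symm)
          (sub_pos.2 (lt_of_le_of_ne hr.2 hr'.2))
        obtain ⟨h1, h2⟩ := G.eq_of_bump (t := ⟨r, hr⟩) (r := ⟨t, ht⟩) hpos (congrArg _ h.symm)
        exact ⟨h1.symm, (congrArg Subtype.val h2).symm⟩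
    · left
      push Not at ht'
      have hpos : 0 < t * (1 - t) := mul_pos (lt_of_le_of_ne ht.1 ht'.1.symm)
        (sub_pos.2 (lt_of_le_of_ne ht.2 ht'.2))
      obtain ⟨h1, h2⟩ := G.eq_of_bump (t := ⟨t, ht⟩) (r := ⟨r, hr⟩) hpos (congrArg _ h)
      exact ⟨h1, congrArg Subtype.val h2⟩

variable [ConnectedSpace G.Space] (hess : ∃ v : G.V, 3 ≤ G.degree v)

lemma model_hp_false (e : G.E) : (G.model hess).hp (e, false) 0 = G.vtx (G.s e) := by
  change G.edgePt e (Set.projIcc 0 1 zero_le_one 0) = _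
  rw [Set.projIcc_left]
  exact G.edgePt_zero e

lemma model_hp_true (e : G.E) : (G.model hess).hp (e, true) 0 = G.vtx (G.t e) := by
  change G.edgePt e (Set.projIcc 0 1 zero_le_one (1 - 0)) = _
  rw [sub_zero, Set.projIcc_right]
  exact G.edgePt_one e

lemma model_halves (v : G.V) : ((G.model hess).halves (G.vtx v)).ncard = G.degree v := by
  let S : Set (G.E × Bool) := (fun e : G.E => (e, false)) '' {e | G.s e = v} ∪
    (fun e : G.E => (e, true)) '' {e | G.t e = v}
  have h : ∀ z : G.E × Bool, (G.model hess).hp z 0 = G.vtx v ↔ z ∈ S := by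
    rintro ⟨e, b⟩
    cases b
    · refine (Eq.congr_left (G.model_hp_false hess e)).trans (G.vtx_inj.eq_iff.trans ?_)
      simp [S]
    · refine (Eq.congr_left (G.model_hp_true hess e)).trans (G.vtx_inj.eq_iff.trans ?_)
      simp [S]
  have hd : Disjoint ((fun e : G.E => (e, false)) '' {e | G.s e = v})
      ((fun e : G.E => (e, true)) '' {e | G.t e = v}) := by
    rw [Set.disjoint_left]
    rintro _ ⟨e, -, rfl⟩ ⟨f, -, hf⟩
    simp at hf
  refine (congrArg Set.ncard (Set.ext h)).trans ?_
  rw [Set.ncard_union_eq hd (Set.toFinite _) (Set.toFinite _),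
    Set.ncard_image_of_injective _ (fun a b h => congrArg Prod.fst h),
    Set.ncard_image_of_injective _ (fun a b h => congrArg Prod.fst h)]
  rfl

lemma model_ess : (G.model hess).Ess = G.vtx '' {v | 3 ≤ G.degree v} := by
  ext y
  constructor
  · intro hy
    obtain ⟨⟨e, b⟩, rfl⟩ := GModel.ess_vertex hy
    have hv : ∃ v, (G.model hess).hp (e, b) 0 = G.vtx v := by
      cases b
      · exact ⟨_, G.model_hp_false hess e⟩
      · exact ⟨_, G.model_hp_true hess e⟩
    obtain ⟨v, hv⟩ := hv
    rw [hv] at hy ⊢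
    refine ⟨v, ?_, rfl⟩
    change 3 ≤ ((G.model hess).halves (G.vtx v)).ncard at hy
    rwa [model_halves] at hy
  · rintro ⟨v, hv, rfl⟩
    change 3 ≤ ((G.model hess).halves (G.vtx v)).ncard
    rwa [model_halves]

end FinGraph


/-- For a finite tree `Γ` with at least one essential vertex, the collision-free
motion planning problem of `n` particles on `Γ` has topological complexity at most
`2 m(Γ) + 1`, where `m(Γ)` is the number of essential vertices. -/
theorem TC_conf_tree_le (G : FinGraph) (hT : G.IsTree)
    (hess : ∃ v : G.V, 3 ≤ G.degree v) (n : ℕ) (hn : 1 ≤ n) :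
    topologicalComplexity (Conf G.Space n) ≤ 2 * G.essCount + 1 := by
  have := hT.1
  have hE : (G.model hess).Ess.Nonempty := by
    rw [G.model_ess hess]
    obtain ⟨v, hv⟩ := hess
    exact ⟨_, v, hv, rfl⟩
  have hm : (G.model hess).Ess.ncard = G.essCount := by
    rw [G.model_ess hess, Set.ncard_image_of_injective _ G.vtx_inj]
    rfl
  have h := GModel.tc_le (G.model hess) hE hn
  rw [hm] at h
  exact_mod_cast h
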